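/- arXiv:2411.04514 — 4 statements merged into one kernel-verified Lean document; each statement's English description precedes it below -/
import Mathlib

section
/- Let R be a commutative ring and S a multiplicative subset of R. Let (C, W) be a hereditary cotorsion pair of R-modules cogenerated by a set P of pure-injective R-modules. Then the class C_S = {M_S : M ∈ C} of localized modules is the left-hand class of a hereditary cotorsion pair in the category of R_S-modules cogenerated by the set P^S = {Hom_R(R_S, N) : N ∈ P} of pure-injective R_S-modules, and C_S equals the class of those R_S-modules which lie in C when regarded as R-modules. Moreover (C_S)_(i) = (C_(i))_S for every i ≥ 0. -/
open CategoryTheory Opposite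

noncomputable section

/-- Vanishing of the `n`-th Ext group of two `R`-modules. -/
def extV (R : Type) [Ring R] (M N : ModuleCat.{0} R) (n : ℕ) : Prop :=
  Subsingleton (((_root_.Ext ℤ (ModuleCat.{0} R) n).obj (op M)).obj N)

/-- The left `Ext^1`-orthogonal class. -/
def leftPerp1 (R : Type) [Ring R] (𝒳 : Set (ModuleCat.{0} R)) : Set (ModuleCat.{0} R) :=
  {M | ∀ X ∈ 𝒳, extV R M X 1}

/-- The right `Ext^1`-orthogonal class. -/
def rightPerp1 (R : Type) [Ring R] (𝒳 : Set (ModuleCat.{0} R)) : Set (ModuleCat.{0} R) :=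
  {N | ∀ X ∈ 𝒳, extV R X N 1}

/-- `(𝒞, 𝒲)` is a cotorsion pair. -/
def IsCotorsionPair (R : Type) [Ring R] (𝒞 𝒲 : Set (ModuleCat.{0} R)) : Prop :=
  𝒞 = leftPerp1 R 𝒲 ∧ 𝒲 = rightPerp1 R 𝒞

/-- `(𝒞, 𝒲)` is a hereditary cotorsion pair. -/
def IsHereditaryCotorsionPair (R : Type) [Ring R] (𝒞 𝒲 : Set (ModuleCat.{0} R)) : Prop :=
  IsCotorsionPair R 𝒞 𝒲 ∧ ∀ X ∈ 𝒞, ∀ Y ∈ 𝒲, ∀ i : ℕ, 1 ≤ i → extV R X Y i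

/-- The class `𝒞_(i) = {M ∣ Ext^j(M, W) = 0 for all j > i and all W ∈ 𝒲}`. -/
def cotShift (R : Type) [Ring R] (𝒲 : Set (ModuleCat.{0} R)) (i : ℕ) : Set (ModuleCat.{0} R) :=
  {M | ∀ Y ∈ 𝒲, ∀ j : ℕ, i < j → extV R M Y j}

/-- `f : A →ₗ[R] B` is a pure monomorphism. -/
def IsPureMono (R : Type) [CommRing R] {A B : Type} [AddCommGroup A] [Module R A]
    [AddCommGroup B] [Module R B] (f : A →ₗ[R] B) : Prop :=
  Function.Injective f ∧
    ∀ (Q : Type) [AddCommGroup Q] [Module R Q], Function.Injective (LinearMap.lTensor Q f)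

/-- An `R`-module `N` is pure-injective if it is injective with respect to
pure monomorphisms. -/
def PureInjective (R : Type) [CommRing R] (N : Type) [AddCommGroup N] [Module R N] : Prop :=
  ∀ (A B : Type) [AddCommGroup A] [Module R A] [AddCommGroup B] [Module R B]
    (f : A →ₗ[R] B), IsPureMono R f → ∀ g : A →ₗ[R] N, ∃ h : B →ₗ[R] N, h.comp f = g

/-- The class of localizations `{M_S ∣ M ∈ 𝒳}` (closed under isomorphism). -/
def locClass (R : Type) [CommRing R] (S : Submonoid R) (𝒳 : Set (ModuleCat.{0} R)) :
    Set (ModuleCat.{0} (Localization S)) :=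
  {X | ∃ M ∈ 𝒳, Nonempty (X ≅ ModuleCat.of (Localization S) (LocalizedModule S ↥M))}

/-- The class of `R_S`-modules which lie in `𝒳` when regarded as `R`-modules. -/
def resClass (R : Type) [CommRing R] (S : Submonoid R) (𝒳 : Set (ModuleCat.{0} R)) :
    Set (ModuleCat.{0} (Localization S)) :=
  {X | (ModuleCat.restrictScalars (algebraMap R (Localization S))).obj X ∈ 𝒳}

/-- The `R_S`-module structure on the colocalization `Hom_R(R_S, N)`,
given by `(x • f) (y) = f (x * y)`. -/
instance colocModule (R : Type) [CommRing R] (S : Submonoid R)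
    (N : Type) [AddCommGroup N] [Module R N] :
    Module (Localization S) (Localization S →ₗ[R] N) where
  smul x f := f.comp (LinearMap.mulLeft R x)
  one_smul f := LinearMap.ext fun a => by
    show f (1 * a) = f a
    rw [one_mul]
  mul_smul x y f := LinearMap.ext fun a => by
    show f (x * y * a) = f (y * (x * a))
    ring_nf
  smul_zero x := rfl
  smul_add x f g := rfl
  add_smul x y f := LinearMap.ext fun a => by
    show f ((x + y) * a) = f (x * a) + f (y * a)
    rw [add_mul, map_add]
  zero_smul f := LinearMap.ext fun a => by
    show f (0 * a) = 0
    rw [zero_mul, map_zero]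

/-- The class `Pcl^S = {Hom_R(R_S, N) ∣ N ∈ Pcl}` of colocalizations, as `R_S`-modules. -/
def colocClass (R : Type) [CommRing R] (S : Submonoid R) (Pcl : Set (ModuleCat.{0} R)) :
    Set (ModuleCat.{0} (Localization S)) :=
  {X | ∃ N ∈ Pcl, Nonempty (X ≅ ModuleCat.of (Localization S) (Localization S →ₗ[R] ↥N))}

theorem extV_iff (R : Type) [Ring R] (M N : ModuleCat.{0} R) (n : ℕ) :
    extV R M N (n+1) ↔ Subsingleton (Abelian.Ext M N (n+1)) := by
  let P := projectiveResolution M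
  have e := P.isoExt (R := ℤ) (n+1) N
  have h1 : extV R M N (n+1) ↔ Limits.IsZero ((P.complex.linearYonedaObj ℤ N).homology (n+1)) := by
    rw [← e.isZero_iff, ModuleCat.isZero_iff_subsingleton]
    rfl
  rw [h1, ← HomologicalComplex.exactAt_iff_isZero_homology,
    HomologicalComplex.exactAt_iff' _ n (n+1) (n+2) (by simp) (by simp),
    ShortComplex.moduleCat_exact_iff]
  constructor
  · intro h
    refine ⟨fun a b => ?_⟩
    suffices H : ∀ a : Abelian.Ext M N (n+1), a = 0 by rw [H a, H b]
    intro a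
    obtain ⟨f, hf, rfl⟩ := P.extMk_surjective a (n+2) rfl
    rw [P.extMk_eq_zero_iff _ _ _ _ n rfl]
    exact h f hf
  · intro h f hf
    have := Subsingleton.elim (P.extMk (f : P.complex.X (n+1) ⟶ N) (n+2) rfl hf) 0
    exact (P.extMk_eq_zero_iff _ _ _ _ n rfl).1 this

theorem extV_iso (R : Type) [Ring R] {M M' N N' : ModuleCat.{0} R} (e : M ≅ M') (e' : N ≅ N')
    {n : ℕ} (h : extV R M N n) : extV R M' N' n := by
  unfold extV at *
  have e1 := ((_root_.Ext ℤ (ModuleCat.{0} R) n).mapIso e.op).app N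
  have e2 := ((_root_.Ext ℤ (ModuleCat.{0} R) n).obj (op M')).mapIso e'
  exact (e1.symm ≪≫ e2).toLinearEquiv.symm.toEquiv.subsingleton

/-- unbundled -/
abbrev EV (R : Type) [Ring R] (M N : Type) [AddCommGroup M] [Module R M]
  [AddCommGroup N] [Module R N] (n : ℕ) : Prop := extV R (ModuleCat.of R M) (ModuleCat.of R N) n

section
variable {R : Type} [Ring R] {K F M N : Type} [AddCommGroup K] [Module R K]
  [AddCommGroup F] [Module R F] [AddCommGroup M] [Module R M] [AddCommGroup N] [Module R N]

theorem EV_congr {M' N' : Type} [AddCommGroup M'] [Module R M'] [AddCommGroup N'] [Module R N']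
    (e : M ≃ₗ[R] M') (e' : N ≃ₗ[R] N') {n : ℕ} (h : EV R M N n) : EV R M' N' n :=
  extV_iso R e.toModuleIso e'.toModuleIso h

theorem EV_proj [Module.Projective R M] (n : ℕ) : EV R M N (n+1) := by
  have : Projective (ModuleCat.of R M) := (IsProjective.iff_projective (R := R) M).1 inferInstance
  have := isZero_Ext_succ_of_projective (R := ℤ) (ModuleCat.of R M) (ModuleCat.of R N) n
  rwa [ModuleCat.isZero_iff_subsingleton] at this

variable {f : K →ₗ[R] F} {g : F →ₗ[R] M} (hf : Function.Injective f) (hg : Function.Surjective g)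
  (hfg : Function.Exact f g)

theorem sE (hf : Function.Injective f) (hg : Function.Surjective g)
  (hfg : Function.Exact f g) : (ShortComplex.mk (ModuleCat.ofHom f) (ModuleCat.ofHom g)
    (by ext x; exact hfg.apply_apply_eq_zero x)).ShortExact where
  exact := by
    rw [ShortComplex.moduleCat_exact_iff]
    intro x hx
    exact (hfg x).1 hx
  mono_f := (ModuleCat.mono_iff_injective _).2 hf
  epi_g := (ModuleCat.epi_iff_surjective _).2 hg

theorem ext_of_EV (hf : Function.Injective f) (hg : Function.Surjective g)
    (hfg : Function.Exact f g) (h : EV R M N 1) (u : K →ₗ[R] N) : ∃ v : F →ₗ[R] N, v ∘ₗ f = u := by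
  have S := sE hf hg hfg
  rw [EV, extV_iff] at h
  obtain ⟨x, hx⟩ := Abelian.Ext.contravariant_sequence_exact₁ S (ModuleCat.of R N)
    (Abelian.Ext.mk₀ (ModuleCat.ofHom u)) (n₁ := 1) rfl (Subsingleton.elim _ _)
  obtain ⟨v, rfl⟩ := Abelian.Ext.addEquiv₀.symm.surjective x
  refine ⟨v.hom, ?_⟩
  simp only [Abelian.Ext.addEquiv₀_symm_apply, Abelian.Ext.mk₀_comp_mk₀] at hx
  have := (Abelian.Ext.mk₀_bijective _ _).1 hx
  exact congrArg ModuleCat.Hom.hom this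

theorem EV_of_ext (hf : Function.Injective f) (hg : Function.Surjective g)
    (hfg : Function.Exact f g) (hF : EV R F N 1) (h : ∀ u : K →ₗ[R] N, ∃ v : F →ₗ[R] N, v ∘ₗ f = u) :
    EV R M N 1 := by
  have S := sE hf hg hfg
  rw [EV, extV_iff] at hF ⊢
  suffices H : ∀ a : Abelian.Ext (ModuleCat.of R M) (ModuleCat.of R N) (0+1), a = 0 from
    ⟨fun a b => by rw [H a, H b]⟩
  intro a
  obtain ⟨x, hx⟩ := Abelian.Ext.contravariant_sequence_exact₃ S (ModuleCat.of R N) a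
    (Subsingleton.elim _ _) (n₀ := 0) rfl
  obtain ⟨v, rfl⟩ := Abelian.Ext.addEquiv₀.symm.surjective x
  obtain ⟨w, hw⟩ := h v.hom
  rw [← hx]
  have : v = ModuleCat.ofHom f ≫ ModuleCat.ofHom w := ModuleCat.hom_ext hw.symm
  rw [this, Abelian.Ext.addEquiv₀_symm_apply, ← Abelian.Ext.mk₀_comp_mk₀]
  exact S.extClass_comp_assoc _

theorem EV_shift1 (hf : Function.Injective f) (hg : Function.Surjective g)
    (hfg : Function.Exact f g) {n : ℕ} (hF : EV R F N (n+1)) (hM : EV R M N (n+2)) :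
    EV R K N (n+1) := by
  have S := sE hf hg hfg
  rw [EV, extV_iff] at *
  refine ⟨?_⟩
  suffices H : ∀ a : Abelian.Ext (ModuleCat.of R K) (ModuleCat.of R N) (n+1), a = 0 from
    fun a b => by rw [H a, H b]
  intro a
  obtain ⟨x, hx⟩ := Abelian.Ext.contravariant_sequence_exact₁ S (ModuleCat.of R N)
    a (n₁ := n+1+1) (add_comm _ _) (Subsingleton.elim _ _)
  rw [← hx, Subsingleton.elim x 0, Abelian.Ext.comp_zero]

theorem EV_shift2 (hf : Function.Injective f) (hg : Function.Surjective g)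
    (hfg : Function.Exact f g) {n : ℕ} (hF : EV R F N (n+2)) (hK : EV R K N (n+1)) :
    EV R M N (n+2) := by
  have S := sE hf hg hfg
  rw [EV, extV_iff] at *
  refine ⟨?_⟩
  suffices H : ∀ a : Abelian.Ext (ModuleCat.of R M) (ModuleCat.of R N) (n+1+1), a = 0 from
    fun a b => by rw [H a, H b]
  intro a
  obtain ⟨x, hx⟩ := Abelian.Ext.contravariant_sequence_exact₃ S (ModuleCat.of R N) a
    (Subsingleton.elim _ _) (n₀ := n+1) (add_comm _ _)
  rw [← hx, Subsingleton.elim x 0, Abelian.Ext.comp_zero]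

end

theorem free_pres (A : Type) [Ring A] (X : Type) [AddCommGroup X] [Module A X] :
    ∃ (K : Type) (_ : AddCommGroup K) (_ : Module A K) (j : K →ₗ[A] (X →₀ A))
      (p : (X →₀ A) →ₗ[A] X), Function.Injective j ∧ Function.Surjective p ∧
        Function.Exact j p := by
  let p : (X →₀ A) →ₗ[A] X := Finsupp.linearCombination A id
  exact ⟨LinearMap.ker p, inferInstance, inferInstance, (LinearMap.ker p).subtype, p,
    Subtype.val_injective, Finsupp.linearCombination_id_surjective A X,
    LinearMap.exact_subtype_ker_map p⟩

section
open TensorProduct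

variable {R : Type} [CommRing R] {K F M N : Type} [AddCommGroup K] [Module R K]
  [AddCommGroup F] [Module R F] [AddCommGroup M] [Module R M] [AddCommGroup N] [Module R N]

theorem EV_finsupp (I : Type) (h : EV R M N 1) : EV R (I →₀ M) N 1 := by
  obtain ⟨K, _, _, j, p, hj, hp, hjp⟩ := free_pres (R) M
  have hext := ext_of_EV hj hp hjp h
  refine EV_of_ext (K := I →₀ K) (F := I →₀ M →₀ R) (f := Finsupp.mapRange.linearMap (α := I) j)
    (g := Finsupp.mapRange.linearMap (α := I) p) ?_ ?_ ?_ (EV_proj 0) ?_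
  · exact Finsupp.mapRange_injective j (map_zero j) hj
  · exact Finsupp.mapRange_surjective p (map_zero p) hp
  · intro x
    constructor
    · intro hx
      have h2 : ∀ i, ∃ y, j y = x i := fun i => (hjp (x i)).1 (by
        have := DFunLike.congr_fun hx i
        simpa using this)
      choose y hy using h2
      refine ⟨Finsupp.onFinset x.support y ?_, ?_⟩
      · intro i hi
        rw [Finsupp.mem_support_iff, ← hy]
        exact fun h0 => hi (hj (by rw [h0, map_zero]))
      · ext1 i
        simp [hy]
    · rintro ⟨y, rfl⟩
      ext i
      simp only [Finsupp.mapRange.linearMap_apply, Finsupp.mapRange_apply, Finsupp.coe_zero,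
        Pi.zero_apply]
      exact hjp.apply_apply_eq_zero (y i)
  · intro u
    choose v hv using fun i => hext (u ∘ₗ Finsupp.lsingle i)
    refine ⟨Finsupp.lsum ℕ v, ?_⟩
    ext i x
    have := LinearMap.congr_fun (hv i) x
    simpa using this

theorem EV_pure {f : K →ₗ[R] F} {g : F →ₗ[R] M} (hf : IsPureMono R f)
    (hg : Function.Surjective g) (hfg : Function.Exact f g) (hN : PureInjective R N)
    (hF : EV R F N 1) : EV R M N 1 :=
  EV_of_ext hf.1 hg hfg hF fun u => hN _ _ f hf u

theorem EV_tensor (hN : PureInjective R N) (Λ : Type) [AddCommGroup Λ] [Module R Λ]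
    [Module.Flat R Λ] (h : EV R M N 1) : EV R (M ⊗[R] Λ) N 1 := by
  obtain ⟨K, _, _, j, p, hj, hp, hjp⟩ := free_pres (R) Λ
  have H := fun (A : Type) [AddCommGroup A] [Module R A] =>
    LinearMap.lTensor_injective_of_exact_of_flat p hp j hj hjp A
  refine EV_pure (f := j.lTensor M) (g := p.lTensor M) ⟨H M, ?_⟩ (LinearMap.lTensor_surjective M hp)
    (lTensor_exact M hjp hp) hN ?_
  · intro Q _ _
    have h1 := H (Q ⊗[R] M)
    rw [LinearMap.lTensor_tensor] at h1
    have h2 : Function.Injective ((j.lTensor M).lTensor Q ∘ₗ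
        (TensorProduct.assoc R Q M _).toLinearMap) := by
      have := h1
      simp only [LinearMap.coe_comp, LinearEquiv.coe_coe] at this ⊢
      exact (Function.Injective.of_comp_iff (LinearEquiv.injective _) _).1 this
    simp only [LinearMap.coe_comp, LinearEquiv.coe_coe] at h2
    exact (Function.Injective.of_comp_iff' _ (LinearEquiv.bijective _)).1 h2
  · classical
    exact EV_congr (TensorProduct.finsuppScalarRight R R M Λ).symm (LinearEquiv.refl R N)
      (EV_finsupp Λ h)

theorem EV_flat (hN : PureInjective R N) (Λ : Type) [AddCommGroup Λ] [Module R Λ]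
    [Module.Flat R Λ] : EV R Λ N 1 :=
  EV_congr (TensorProduct.lid R Λ) (LinearEquiv.refl R N) (EV_tensor hN Λ (M := R) (EV_proj 0))

theorem EV_loc (S : Submonoid R) (hN : PureInjective R N) (h : EV R M N 1) :
    EV R (LocalizedModule S M) N 1 :=
  EV_congr ((TensorProduct.comm R _ _).trans
    ((LocalizedModule.equivTensorProduct S M).restrictScalars R).symm) (LinearEquiv.refl R N)
      (EV_tensor hN (Localization S) h)

variable (S : Submonoid R)

/-- adjunction -/
def toColoc {X : Type} [AddCommGroup X] [Module R X] [Module (Localization S) X]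
    [IsScalarTower R (Localization S) X] (u : X →ₗ[R] N) :
    X →ₗ[Localization S] (Localization S →ₗ[R] N) where
  toFun x := u ∘ₗ (LinearMap.toSpanSingleton (Localization S) X x).restrictScalars R
  map_add' x y := by ext a; simp
  map_smul' c x := by
    ext a
    change u (a • c • x) = u ((c * a) • x)
    rw [smul_smul, mul_comm]

theorem toColoc_apply {X : Type} [AddCommGroup X] [Module R X] [Module (Localization S) X]
    [IsScalarTower R (Localization S) X] (u : X →ₗ[R] N) (x : X) (a : Localization S) :
    toColoc S u x a = u (a • x) := rfl

/-- adjunction -/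
def fromColoc {X : Type} [AddCommGroup X] [Module R X] [Module (Localization S) X]
    [IsScalarTower R (Localization S) X] (u : X →ₗ[Localization S] (Localization S →ₗ[R] N)) :
    X →ₗ[R] N where
  toFun x := u x 1
  map_add' x y := by simp
  map_smul' c x := by
    rw [← algebraMap_smul (Localization S) c x, map_smul]
    change u x (algebraMap R (Localization S) c * 1) = _
    rw [← Algebra.smul_def, map_smul]
    rfl

theorem coloc_smul_apply (u : Localization S →ₗ[R] N) (a b : Localization S) :
    (a • u) b = u (a * b) := rfl

theorem coloc_ext_iff {X Y : Type} [AddCommGroup X] [Module R X] [Module (Localization S) X]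
    [IsScalarTower R (Localization S) X] [AddCommGroup Y] [Module R Y] [Module (Localization S) Y]
    [IsScalarTower R (Localization S) Y] (f : X →ₗ[Localization S] Y) :
    (∀ u : X →ₗ[Localization S] (Localization S →ₗ[R] N),
      ∃ v : Y →ₗ[Localization S] (Localization S →ₗ[R] N), v ∘ₗ f = u) ↔
    (∀ u : X →ₗ[R] N, ∃ v : Y →ₗ[R] N, v ∘ₗ f.restrictScalars R = u) := by
  constructor
  · intro h u
    obtain ⟨v, hv⟩ := h (toColoc S u)
    refine ⟨fromColoc S v, ?_⟩
    ext x
    change v (f x) 1 = u x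
    rw [← LinearMap.comp_apply, hv, toColoc_apply, one_smul]
  · intro h u
    obtain ⟨v, hv⟩ := h (fromColoc S u)
    refine ⟨toColoc S v, ?_⟩
    refine LinearMap.ext fun x => LinearMap.ext fun a => ?_
    have := LinearMap.congr_fun hv (a • x)
    change v (a • f x) = u x a
    change v (f (a • x)) = u (a • x) 1 at this
    rw [map_smul f, map_smul u, coloc_smul_apply, mul_one] at this
    exact this

theorem EV_coloc_iff (hN : PureInjective R N) {X : Type} [AddCommGroup X] [Module R X]
    [Module (Localization S) X] [IsScalarTower R (Localization S) X] :
    EV (Localization S) X (Localization S →ₗ[R] N) 1 ↔ EV R X N 1 := by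
  obtain ⟨K, _, _, j, p, hj, hp, hjp⟩ := free_pres (Localization S) X
  let : Module R K := Module.compHom K (algebraMap R (Localization S))
  have : IsScalarTower R (Localization S) K := IsScalarTower.of_algebraMap_smul fun _ _ => rfl
  have key := coloc_ext_iff (N := N) S j
  constructor
  · intro h
    exact EV_of_ext (f := j.restrictScalars R) (g := p.restrictScalars R) hj hp hjp
      (EV_finsupp X (EV_flat hN _)) (key.1 (ext_of_EV hj hp hjp h))
  · intro h
    exact EV_of_ext hj hp hjp (EV_proj 0)
      (key.2 (ext_of_EV (f := j.restrictScalars R) (g := p.restrictScalars R) hj hp hjp h))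

theorem pureInjective_coloc (hN : PureInjective R N) :
    PureInjective (Localization S) (Localization S →ₗ[R] N) := by
  intro A B _ _ _ _ f hf
  let : Module R A := Module.compHom A (algebraMap R (Localization S))
  let : Module R B := Module.compHom B (algebraMap R (Localization S))
  have : IsScalarTower R (Localization S) A := IsScalarTower.of_algebraMap_smul fun _ _ => rfl
  have : IsScalarTower R (Localization S) B := IsScalarTower.of_algebraMap_smul fun _ _ => rfl
  refine (coloc_ext_iff S f).2 ?_
  refine hN A B (f.restrictScalars R) ⟨hf.1, ?_⟩
  intro Q _ _
  have h1 := hf.2 (Localization S ⊗[R] Q)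
  let eA := (TensorProduct.comm _ _ _).trans
    (AlgebraTensorModule.cancelBaseChange R (Localization S) (Localization S) A Q)
  let eB := (TensorProduct.comm _ _ _).trans
    (AlgebraTensorModule.cancelBaseChange R (Localization S) (Localization S) B Q)
  have h2 : ∀ x, LinearMap.rTensor Q (f.restrictScalars R) (eA x) = eB (LinearMap.lTensor _ f x) := by
    intro x
    induction x with
    | zero => simp
    | add x y hx hy => simp only [map_add, hx, hy]
    | tmul x y =>
      induction x with
      | zero => simp
      | add x y hx hy => simp only [map_add, hx, hy, TensorProduct.add_tmul]
      | tmul x z => simp [eA, eB]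
  have h3 : Function.Injective (LinearMap.rTensor Q (f.restrictScalars R)) := by
    rw [← Function.Injective.of_comp_iff' _ eA.bijective]
    intro x y hxy
    simp only [Function.comp_apply, h2] at hxy
    exact h1 (eB.injective hxy)
  exact (LinearMap.lTensor_inj_iff_rTensor_inj Q _).2 h3

theorem PureInjective.congr {N' : Type} [AddCommGroup N'] [Module R N'] (e : N ≃ₗ[R] N')
    (hN : PureInjective R N) : PureInjective R N' := by
  intro A B _ _ _ _ f hf g
  obtain ⟨h, hh⟩ := hN A B f hf (e.symm ∘ₗ g)
  refine ⟨e ∘ₗ h, ?_⟩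
  rw [LinearMap.comp_assoc, hh]
  ext; simp

end

section
variable {A : Type} [Ring A] {K F M : Type} [AddCommGroup K] [Module A K]
  [AddCommGroup F] [Module A F] [AddCommGroup M] [Module A M]

theorem cotShift_iso {𝒲 : Set (ModuleCat.{0} A)} {i : ℕ} {X Y : ModuleCat.{0} A} (e : X ≅ Y)
    (h : X ∈ cotShift A 𝒲 i) : Y ∈ cotShift A 𝒲 i :=
  fun W hW j hj => extV_iso A e (Iso.refl W) (h W hW j hj)

theorem cotShift_succ_iff {𝒲 : Set (ModuleCat.{0} A)} {f : K →ₗ[A] F} {g : F →ₗ[A] M}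
    (hf : Function.Injective f) (hg : Function.Surjective g) (hfg : Function.Exact f g)
    (hF : ModuleCat.of A F ∈ cotShift A 𝒲 0) (i : ℕ) :
    ModuleCat.of A M ∈ cotShift A 𝒲 (i+1) ↔ ModuleCat.of A K ∈ cotShift A 𝒲 i := by
  constructor
  · intro h W hW j hj
    obtain ⟨j, rfl⟩ : ∃ k, j = k + 1 := ⟨j - 1, by omega⟩
    exact EV_shift1 (N := W) hf hg hfg (hF W hW (j+1) (by omega)) (h W hW (j+2) (by omega))
  · intro h W hW j hj
    obtain ⟨j, rfl⟩ : ∃ k, j = k + 2 := ⟨j - 2, by omega⟩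
    exact EV_shift2 (N := W) hf hg hfg (hF W hW (j+2) (by omega)) (h W hW (j+1) (by omega))

theorem cotShift_mono {𝒲 : Set (ModuleCat.{0} A)} {i j : ℕ} (hij : i ≤ j) :
    cotShift A 𝒲 i ⊆ cotShift A 𝒲 j :=
  fun _ h W hW k hk => h W hW k (lt_of_le_of_lt hij hk)

theorem proj_mem (𝒲 : Set (ModuleCat.{0} A)) [Module.Projective A M] (i : ℕ) :
    ModuleCat.of A M ∈ cotShift A 𝒲 i := by
  intro W hW j hj
  obtain ⟨j, rfl⟩ : ∃ k, j = k + 1 := ⟨j - 1, by omega⟩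
  exact EV_proj (N := W) j

theorem hered_eq {𝒞 𝒲 : Set (ModuleCat.{0} A)} (h : IsHereditaryCotorsionPair A 𝒞 𝒲) :
    cotShift A 𝒲 0 = 𝒞 := by
  apply Set.Subset.antisymm
  · intro X hX
    rw [h.1.1]
    exact fun W hW => hX W hW 1 (by omega)
  · intro X hX W hW j hj
    exact h.2 X hX W hW j hj

end

section
variable {R : Type} [CommRing R] (S : Submonoid R)

theorem resClass_subset (𝒳 : Set (ModuleCat.{0} R)) : resClass R S 𝒳 ⊆ locClass R S 𝒳 := by
  intro X hX
  refine ⟨_, hX, ?_⟩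
  let : Module R X := Module.compHom X (algebraMap R (Localization S))
  have : IsScalarTower R (Localization S) X := IsScalarTower.of_algebraMap_smul fun _ _ => rfl
  have := isLocalizedModule_id S X (Localization S)
  let e : LocalizedModule S X ≃ₗ[R] X := IsLocalizedModule.iso S (LinearMap.id : X →ₗ[R] X)
  let e' : LocalizedModule S X ≃ₗ[Localization S] X :=
    e.extendScalarsOfIsLocalization S (Localization S)
  exact ⟨e'.symm.toModuleIso⟩

theorem locClass_subset {𝒳 : Set (ModuleCat.{0} R)}
    (h1 : ∀ X Y : ModuleCat.{0} R, (X ≅ Y) → X ∈ 𝒳 → Y ∈ 𝒳)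
    (h2 : ∀ M : ModuleCat.{0} R, M ∈ 𝒳 → ModuleCat.of R (LocalizedModule S M) ∈ 𝒳) :
    locClass R S 𝒳 ⊆ resClass R S 𝒳 := by
  rintro X ⟨M, hM, ⟨e⟩⟩
  have hsm : ∀ (r : R) (x : LocalizedModule S M), algebraMap R (Localization S) r • x = r • x :=
    fun r x => algebraMap_smul (Localization S) r x
  let e1 : (ModuleCat.restrictScalars (algebraMap R (Localization S))).obj
      (ModuleCat.of (Localization S) (LocalizedModule S M)) ≅
      ModuleCat.of R (LocalizedModule S M) :=
    @LinearEquiv.toModuleIso R _ (LocalizedModule S M) (LocalizedModule S M) _ _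
      (Module.compHom (LocalizedModule S M) (algebraMap R (Localization S))) _ <|
      @LinearEquiv.mk R R _ _ (RingHom.id R) (RingHom.id R) _ _ (LocalizedModule S M)
        (LocalizedModule S M) _ _ (Module.compHom (LocalizedModule S M) (algebraMap R (Localization S))) _
        (@LinearMap.mk R R _ _ (RingHom.id R) (LocalizedModule S M)
        (LocalizedModule S M) _ _ (Module.compHom (LocalizedModule S M) (algebraMap R (Localization S))) _ ⟨fun x => x, fun _ _ => rfl⟩
          hsm)
        (fun x => x) (fun _ => rfl) (fun _ => rfl)
  exact h1 _ _ (e1.symm ≪≫ ((ModuleCat.restrictScalars _).mapIso e).symm) (h2 M hM)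

end
/-- for a hereditary cotorsion pair `(𝒞, 𝒲)` of `R`-modules cogenerated by a
set `Pcl` of pure-injective modules, the class `𝒞_S` of localized modules is the left-hand
class of a hereditary cotorsion pair of `R_S`-modules cogenerated by the set `Pcl^S` of
pure-injective `R_S`-modules; moreover `𝒞_S` is the class of `R_S`-modules lying in `𝒞`
as `R`-modules, and `(𝒞_S)_(i) = (𝒞_(i))_S` for all `i ≥ 0`. -/
theorem stmt2 (R : Type) [CommRing R] (S : Submonoid R)
    (𝒞 𝒲 Pcl : Set (ModuleCat.{0} R))
    (hpair : IsHereditaryCotorsionPair R 𝒞 𝒲)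
    (hPI : ∀ P ∈ Pcl, PureInjective R ↥P)
    (hcogen : 𝒞 = leftPerp1 R Pcl) :
    (∀ X ∈ colocClass R S Pcl, PureInjective (Localization S) ↥X) ∧
    IsHereditaryCotorsionPair (Localization S) (locClass R S 𝒞)
      (rightPerp1 (Localization S) (locClass R S 𝒞)) ∧
    locClass R S 𝒞 = leftPerp1 (Localization S) (colocClass R S Pcl) ∧
    locClass R S 𝒞 = resClass R S 𝒞 ∧
    (∀ i : ℕ,
      cotShift (Localization S) (rightPerp1 (Localization S) (locClass R S 𝒞)) i =
        locClass R S (cotShift R 𝒲 i)) := by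

  have hC0 : cotShift R 𝒲 0 = 𝒞 := hered_eq hpair
  -- closure of the shifted classes under localization
  have hloc : ∀ (i : ℕ) (M : ModuleCat.{0} R), M ∈ cotShift R 𝒲 i →
      ModuleCat.of R (LocalizedModule S M) ∈ cotShift R 𝒲 i := by
    intro i
    induction i with
    | zero =>
      intro M hM
      rw [hC0, hcogen] at hM ⊢
      exact fun N hN => EV_loc S (hPI N hN) (hM N hN)
    | succ i ih =>
      intro M hM
      obtain ⟨K, _, _, j, p, hj, hp, hjp⟩ := free_pres R M
      have hF : ModuleCat.of R (M →₀ R) ∈ cotShift R 𝒲 0 := proj_mem _ _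
      have hK := (cotShift_succ_iff hj hp hjp hF i).1 hM
      have hK' := ih _ hK
      have hF' : ModuleCat.of R (LocalizedModule S (M →₀ R)) ∈ cotShift R 𝒲 0 := by
        rw [hC0, hcogen] at hF ⊢
        exact fun N hN => EV_loc S (hPI N hN) (hF N hN)
      refine (cotShift_succ_iff
        (f := IsLocalizedModule.map S (LocalizedModule.mkLinearMap S K)
          (LocalizedModule.mkLinearMap S (M →₀ R)) j)
        (g := IsLocalizedModule.map S (LocalizedModule.mkLinearMap S (M →₀ R))
          (LocalizedModule.mkLinearMap S M) p) ?_ ?_ ?_ hF' i).2 hK'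
      · exact IsLocalizedModule.map_injective S _ _ _ hj
      · exact IsLocalizedModule.map_surjective S _ _ _ hp
      · exact IsLocalizedModule.map_exact S _ _ _ _ _ hjp
  have hlr : ∀ i, locClass R S (cotShift R 𝒲 i) = resClass R S (cotShift R 𝒲 i) := fun i =>
    Set.Subset.antisymm (locClass_subset S (fun _ _ e h => cotShift_iso e h) (hloc i))
      (resClass_subset S _)
  have hlr0 : locClass R S 𝒞 = resClass R S 𝒞 := by rw [← hC0]; exact hlr 0
  have hperp : resClass R S 𝒞 = leftPerp1 (Localization S) (colocClass R S Pcl) := by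
    ext X
    let : Module R X := Module.compHom X (algebraMap R (Localization S))
    have : IsScalarTower R (Localization S) X := IsScalarTower.of_algebraMap_smul fun _ _ => rfl
    have hX : X ∈ resClass R S 𝒞 ↔ ∀ N ∈ Pcl, EV R X N 1 := by
      rw [hcogen]; exact Iff.rfl
    rw [hX]
    constructor
    · rintro h Y ⟨N, hN, ⟨e⟩⟩
      exact extV_iso _ (Iso.refl X) e.symm ((EV_coloc_iff S (hPI N hN)).2 (h N hN))
    · intro h N hN
      exact (EV_coloc_iff S (hPI N hN)).1 (h _ ⟨N, hN, ⟨Iso.refl _⟩⟩)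
  -- syzygies
  have hsyz : ∀ X : ModuleCat.{0} (Localization S), ∃ (K : ModuleCat.{0} (Localization S))
      (F : ModuleCat.{0} (Localization S)) (_ : Module.Projective (Localization S) F)
      (j : K →ₗ[Localization S] F) (p : F →ₗ[Localization S] X),
      Function.Injective j ∧ Function.Surjective p ∧ Function.Exact j p ∧
      ∀ i, X ∈ resClass R S (cotShift R 𝒲 (i+1)) ↔ K ∈ resClass R S (cotShift R 𝒲 i) := by
    intro X
    obtain ⟨K, _, _, j, p, hj, hp, hjp⟩ := free_pres (Localization S) X
    refine ⟨ModuleCat.of _ K, ModuleCat.of _ (X →₀ Localization S),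
      inferInstanceAs (Module.Projective (Localization S) (X →₀ Localization S)), j, p,
      hj, hp, hjp, fun i => ?_⟩
    let : Module R X := Module.compHom X (algebraMap R (Localization S))
    have : IsScalarTower R (Localization S) X := IsScalarTower.of_algebraMap_smul fun _ _ => rfl
    let : Module R K := Module.compHom K (algebraMap R (Localization S))
    have : IsScalarTower R (Localization S) K := IsScalarTower.of_algebraMap_smul fun _ _ => rfl
    have hF : ModuleCat.of R (X →₀ Localization S) ∈ cotShift R 𝒲 0 := by
      rw [hC0, hcogen]
      exact fun N hN => EV_finsupp X (EV_flat (hPI N hN) _)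
    exact cotShift_succ_iff (f := j.restrictScalars R) (g := p.restrictScalars R) hj hp hjp hF i
  have hher : IsHereditaryCotorsionPair (Localization S) (locClass R S 𝒞)
      (rightPerp1 (Localization S) (locClass R S 𝒞)) := by
    refine ⟨⟨?_, rfl⟩, ?_⟩
    · apply Set.Subset.antisymm
      · exact fun X hX Y hY => hY X hX
      · intro X hX
        rw [hlr0, hperp]
        intro Y hY
        refine hX Y fun Z hZ => ?_
        rw [hlr0, hperp] at hZ
        exact hZ Y hY
    · intro X hX Y hY i hi
      obtain ⟨i, rfl⟩ : ∃ k, i = k + 1 := ⟨i - 1, by omega⟩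
      induction i generalizing X with
      | zero => exact hY X hX
      | succ i ih =>
        obtain ⟨K, F, _, j, p, hj, hp, hjp, hK⟩ := hsyz X
        refine EV_shift2 (N := Y) hj hp hjp (EV_proj _) (ih K ?_ (by omega))
        rw [hlr0, ← hC0] at hX ⊢
        exact (hK 0).1 (cotShift_mono (by omega) hX)
  refine ⟨?_, hher, hlr0.trans hperp, hlr0, ?_⟩
  · rintro X ⟨N, hN, ⟨e⟩⟩
    exact (pureInjective_coloc S (hPI N hN)).congr e.symm.toLinearEquiv
  · intro i
    rw [hlr i]
    induction i with
    | zero => rw [hered_eq hher, hC0, hlr0]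
    | succ i ih =>
      ext X
      obtain ⟨K, F, _, j, p, hj, hp, hjp, hK⟩ := hsyz X
      rw [hK i, ← ih]
      exact cotShift_succ_iff hj hp hjp (proj_mem _ _) i
end
end

section
/- Let R be a commutative ring and S a multiplicative subset of R. Let (E, C) be a Tor-pair of R-modules. Then (E_S, C_S), where E_S = {E_S : E ∈ E} and C_S = {C_S : C ∈ C}, is a Tor-pair in the category of R_S-modules; moreover E_S equals the class of R_S-modules lying in E, and C_S equals the class of R_S-modules lying in C. If in addition (E, C) is hereditary, then ((E_S)_(i), (C_S)_(i)) coincides with ((E_(i))_S, (C_(i))_S) as Tor-pairs of R_S-modules for every i ≥ 0. -/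
open CategoryTheory Opposite

noncomputable section

/-- Vanishing of the `n`-th Tor group of two `R`-modules. -/
def torV (R : Type) [CommRing R] (M N : ModuleCat.{0} R) (n : ℕ) : Prop :=
  Subsingleton (((Tor (ModuleCat.{0} R) n).obj M).obj N)

/-- The left `Tor_1`-orthogonal class. -/
def torLeft1 (R : Type) [CommRing R] (𝒳 : Set (ModuleCat.{0} R)) : Set (ModuleCat.{0} R) :=
  {M | ∀ X ∈ 𝒳, torV R M X 1}

/-- The right `Tor_1`-orthogonal class. -/
def torRight1 (R : Type) [CommRing R] (𝒳 : Set (ModuleCat.{0} R)) : Set (ModuleCat.{0} R) :=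
  {M | ∀ X ∈ 𝒳, torV R X M 1}

/-- `(ℰ, 𝒞)` is a Tor-pair. -/
def IsTorPair (R : Type) [CommRing R] (ℰ 𝒞 : Set (ModuleCat.{0} R)) : Prop :=
  ℰ = torLeft1 R 𝒞 ∧ 𝒞 = torRight1 R ℰ

/-- `(ℰ, 𝒞)` is a hereditary Tor-pair: all higher Tor-groups vanish as well. -/
def IsHereditaryTorPair (R : Type) [CommRing R] (ℰ 𝒞 : Set (ModuleCat.{0} R)) : Prop :=
  IsTorPair R ℰ 𝒞 ∧ ∀ X ∈ ℰ, ∀ Y ∈ 𝒞, ∀ i : ℕ, 1 ≤ i → torV R X Y i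

/-- The class `𝒞_(i) = {M ∣ Tor_j(E, M) = 0 for all j > i and all E ∈ ℰ}`. -/
def torShift (R : Type) [CommRing R] (ℰ : Set (ModuleCat.{0} R)) (i : ℕ) :
    Set (ModuleCat.{0} R) :=
  {M | ∀ X ∈ ℰ, ∀ j : ℕ, i < j → torV R X M j}

namespace TorLoc
open MonoidalCategory Limits

section alg
variable {R : Type} [CommRing R] (S : Submonoid R)

/-- extension of scalars -/
abbrev ext : ModuleCat.{0} R ⥤ ModuleCat.{0} (Localization S) :=
  ModuleCat.extendScalars (algebraMap R (Localization S))

abbrev res : ModuleCat.{0} (Localization S) ⥤ ModuleCat.{0} R :=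
  ModuleCat.restrictScalars (algebraMap R (Localization S))

lemma alg_eq : (algebraMap R (Localization S)).toAlgebra =
    (OreLocalization.instAlgebra : Algebra R (Localization S)) := by
  apply Algebra.algebra_ext
  intro r; rfl

lemma equivTensor (A : Type) [CommRing A] [Algebra R A] [IsLocalization S A]
    (M N : Type) [AddCommGroup M] [Module R M] [AddCommGroup N] [Module R N] [Module A N]
    [IsScalarTower R A N] (f : M →ₗ[R] N) [IsLocalizedModule S f] :
    Nonempty (N ≃ₗ[A] TensorProduct R A M) :=
  ⟨(IsLocalizedModule.isBaseChange S A f).equiv.symm⟩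

lemma extIso (M : ModuleCat.{0} R) :
    Nonempty ((ext S).obj M ≅ ModuleCat.of (Localization S) (LocalizedModule S M)) := by
  obtain ⟨e⟩ := @equivTensor R _ S (Localization S) _ (algebraMap R (Localization S)).toAlgebra
    (by rw [alg_eq]; infer_instance) M (LocalizedModule S M) _ _ _ _ _
    (@IsScalarTower.of_algebraMap_smul R (Localization S) _ _ _
      (algebraMap R (Localization S)).toAlgebra _ _
      fun r x => algebraMap_smul (Localization S) r x)
    (LocalizedModule.mkLinearMap S M) inferInstance
  exact ⟨e.symm.toModuleIso⟩

lemma equivLoc (M : Type) [AddCommGroup M] [Module R M] [Module (Localization S) M]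
    [IsScalarTower R (Localization S) M] :
    Nonempty (LocalizedModule S M ≃ₗ[Localization S] M) := by
  have := isLocalizedModule_id S M (Localization S)
  exact ⟨(IsLocalizedModule.iso S (.id : M →ₗ[R] M)).extendScalarsOfIsLocalization S _⟩

lemma locIso (X : ModuleCat.{0} (Localization S)) :
    Nonempty (X ≅ ModuleCat.of (Localization S) (LocalizedModule S ((res S).obj X))) := by
  let _ : Module R X := Module.compHom X (algebraMap R (Localization S))
  have : IsScalarTower R (Localization S) X := IsScalarTower.of_algebraMap_smul fun r x => rfl
  obtain ⟨e⟩ := equivLoc S X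
  exact ⟨e.symm.toModuleIso⟩

lemma subsing_loc (M : ModuleCat.{0} R) (h : ∀ s ∈ S, Function.Injective fun m : M => s • m) :
    Subsingleton ((ext S).obj M) ↔ Subsingleton M := by
  obtain ⟨e⟩ := extIso S M
  rw [(e.toLinearEquiv.toEquiv.subsingleton_congr :)]
  change Subsingleton (LocalizedModule S M) ↔ _
  rw [LocalizedModule.subsingleton_iff]
  constructor
  · intro H
    refine subsingleton_of_forall_eq 0 fun m => ?_
    obtain ⟨r, hr, h0⟩ := H m
    exact h r hr (h0.trans (smul_zero r).symm)
  · intro _ m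
    exact ⟨1, S.one_mem, Subsingleton.elim _ _⟩

lemma subsing_ext (M : ModuleCat.{0} R) (h : Subsingleton M) :
    Subsingleton ((ext S).obj M) := by
  refine (subsing_loc S M fun s _ a b _ => Subsingleton.elim _ _).2 h

instance : (ext S).PreservesProjectiveObjects :=
  Functor.preservesProjectiveObjects_of_adjunction_of_preservesEpimorphisms
    (ModuleCat.extendRestrictScalarsAdj _)

lemma ext_exact (T : ShortComplex (ModuleCat.{0} R)) (h : T.Exact) :
    (T.map (ext S)).Exact := by
  rw [CategoryTheory.ShortComplex.ShortExact.moduleCat_exact_iff_function_exact] at h ⊢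
  have := @IsLocalization.flat R (Localization S) _ _ (algebraMap R (Localization S)).toAlgebra S
    (by rw [alg_eq]; infer_instance)
  exact @Module.Flat.lTensor_exact R (Localization S) _ _
    (algebraMap R (Localization S)).toAlgebra.toModule this _ _ _ _ _ _ _ _ _ _ _ h

instance : (ext S).Additive :=
  (ModuleCat.extendRestrictScalarsAdj (algebraMap R (Localization S))).left_adjoint_additive

instance : PreservesFiniteLimits (ext S) := by
  have := ((Functor.exact_tfae (ext S)).out 1 3).mp (ext_exact S)
  exact this.1

instance : PreservesFiniteColimits (ext S) := by
  have := ((Functor.exact_tfae (ext S)).out 1 3).mp (ext_exact S)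
  exact this.2

instance : (ext S).PreservesHomology := inferInstance

def torIso (M N : ModuleCat.{0} R) (n : ℕ) :
    ((Tor (ModuleCat.{0} (Localization S)) n).obj ((ext S).obj M)).obj ((ext S).obj N) ≅
      (ext S).obj (((Tor (ModuleCat.{0} R) n).obj M).obj N) := by
  let P := projectiveResolution N
  let Q := (ext S).mapProjectiveResolution P
  refine Q.isoLeftDerivedObj ((tensoringLeft _).obj ((ext S).obj M)) n ≪≫ ?_ ≪≫
    (ext S).mapIso (P.isoLeftDerivedObj ((tensoringLeft _).obj M) n).symm
  let K := (((tensoringLeft _).obj M).mapHomologicalComplex (ComplexShape.down ℕ)).obj P.complex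
  let α : (ext S) ⋙ (tensoringLeft _).obj ((ext S).obj M) ≅ (tensoringLeft _).obj M ⋙ (ext S) :=
    Functor.Monoidal.commTensorLeft (ext S) M
  refine ?_ ≪≫ (K.sc n).mapHomologyIso (ext S)
  refine (HomologicalComplex.homologyFunctor _ (ComplexShape.down ℕ) n).mapIso (?_ :
    _ ≅ ((ext S).mapHomologicalComplex (ComplexShape.down ℕ)).obj K)
  exact HomologicalComplex.Hom.isoOfComponents (fun i => α.app (P.complex.X i))
    (fun i j _ => (α.hom.naturality (P.complex.d i j)).symm)

end alg

section lin
variable {R : Type} [CommRing R]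

lemma hom_smul_id (K : ChainComplex (ModuleCat.{0} R) ℕ) (n : ℕ) (s : R) :
    (HomologicalComplex.homologyFunctor _ (ComplexShape.down ℕ) n).map (s • 𝟙 K) = s • 𝟙 _ := by
  have : (HomologicalComplex.shortComplexFunctor _ (ComplexShape.down ℕ) n).map (s • 𝟙 K) =
      s • 𝟙 (K.sc n) := rfl
  change ShortComplex.homologyMap
    ((HomologicalComplex.shortComplexFunctor _ (ComplexShape.down ℕ) n).map (s • 𝟙 K)) = _
  rw [this, ShortComplex.homologyMap_smul, ShortComplex.homologyMap_id]
  rfl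

lemma tor_map_right (M N : ModuleCat.{0} R) (n : ℕ) (s : R) :
    ((Tor (ModuleCat.{0} R) n).obj M).map (s • 𝟙 N) = s • 𝟙 _ := by
  let P := projectiveResolution N
  have := Functor.leftDerived_map_eq ((tensoringLeft _).obj M) n (s • 𝟙 N) (P := P) (Q := P)
    (s • 𝟙 P.complex) (by
      rw [Linear.smul_comp, Category.id_comp]
      apply HomologicalComplex.to_single_hom_ext
      erw [HomologicalComplex.smul_f_apply])
  refine this.trans ?_
  rw [Functor.comp_map, Functor.map_smul, CategoryTheory.Functor.map_id, hom_smul_id, Linear.smul_comp,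
    Linear.comp_smul, Category.id_comp, Iso.hom_inv_id]
  rfl

lemma tor_map_left (M N : ModuleCat.{0} R) (n : ℕ) (s : R) :
    ((Tor (ModuleCat.{0} R) n).map (s • 𝟙 M)).app N = s • 𝟙 _ := by
  let P := projectiveResolution N
  refine (ProjectiveResolution.leftDerived_app_eq ((tensoringLeft _).map (s • 𝟙 M)) P n).trans ?_
  have : (NatTrans.mapHomologicalComplex ((tensoringLeft _).map (s • 𝟙 M))
      (ComplexShape.down ℕ)).app P.complex = s • 𝟙 _ := by
    ext i : 1
    change (s • 𝟙 M) ▷ (P.complex.X i) = s • 𝟙 (M ⊗ P.complex.X i)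
    rw [MonoidalLinear.smul_whiskerRight, id_whiskerRight]
  rw [this, hom_smul_id, Linear.smul_comp,
    Linear.comp_smul, Category.id_comp, Iso.hom_inv_id]
  rfl

lemma inj_of_iso {X : ModuleCat.{0} R} (s : R) (h : IsIso (s • 𝟙 X)) :
    Function.Injective fun m : X => s • m :=
  (ConcreteCategory.bijective_of_isIso (s • 𝟙 X)).1

end lin

section main
variable {R : Type} [CommRing R] (S : Submonoid R)

lemma iso_smul (X : ModuleCat.{0} (Localization S)) (s : R) (hs : s ∈ S) :
    IsIso (s • 𝟙 ((res S).obj X)) := by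
  obtain ⟨u, hu⟩ := IsLocalization.map_units (Localization S) ⟨s, hs⟩
  have h1 : s • 𝟙 ((res S).obj X) = (res S).map ((u : Localization S) • 𝟙 X) := by
    rw [hu]; rfl
  have h2 : IsIso ((u : Localization S) • 𝟙 X) :=
    ⟨(↑u⁻¹ : Localization S) • 𝟙 X, by simp [smul_smul], by simp [smul_smul]⟩
  rw [h1]; infer_instance

lemma torV_congr {M M' N N' : ModuleCat.{0} R} (e : M ≅ M') (f : N ≅ N') (n : ℕ) :
    torV R M N n ↔ torV R M' N' n :=
  ((((Tor (ModuleCat.{0} R) n).obj M).mapIso f ≪≫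
    ((Tor (ModuleCat.{0} R) n).mapIso e).app N').toLinearEquiv.toEquiv.subsingleton_congr :)

lemma torV_ext (M N : ModuleCat.{0} R) (n : ℕ) :
    torV (Localization S) ((ext S).obj M) ((ext S).obj N) n ↔
      Subsingleton ((ext S).obj (((Tor (ModuleCat.{0} R) n).obj M).obj N)) :=
  ((torIso S M N n).toLinearEquiv.toEquiv.subsingleton_congr :)

lemma extResIso (X : ModuleCat.{0} (Localization S)) :
    Nonempty ((ext S).obj ((res S).obj X) ≅ X) := by
  obtain ⟨e⟩ := locIso S X
  obtain ⟨f⟩ := extIso S ((res S).obj X)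
  exact ⟨f ≪≫ e.symm⟩

lemma F1 (M : ModuleCat.{0} R) (Y : ModuleCat.{0} (Localization S)) (n : ℕ) :
    torV (Localization S) ((ext S).obj M) Y n ↔ torV R M ((res S).obj Y) n := by
  obtain ⟨e⟩ := extResIso S Y
  rw [← torV_congr (Iso.refl _) e, torV_ext, subsing_loc]
  · rfl
  · intro s hs
    apply inj_of_iso
    rw [← tor_map_right]
    have := iso_smul S Y s hs
    infer_instance

lemma F2 (X : ModuleCat.{0} (Localization S)) (N : ModuleCat.{0} R) (n : ℕ) :
    torV (Localization S) X ((ext S).obj N) n ↔ torV R ((res S).obj X) N n := by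
  obtain ⟨e⟩ := extResIso S X
  rw [← torV_congr e (Iso.refl _), torV_ext, subsing_loc]
  · rfl
  · intro s hs
    apply inj_of_iso
    rw [← tor_map_left]
    have := iso_smul S X s hs
    infer_instance

lemma torV_loc {M N : ModuleCat.{0} R} {n : ℕ} (h : torV R M N n) :
    torV (Localization S) ((ext S).obj M) ((ext S).obj N) n :=
  (torV_ext S M N n).2 (subsing_ext S _ h)

/-- Closed under isomorphisms and localization. -/
def Good (𝒳 : Set (ModuleCat.{0} R)) : Prop :=
  (∀ M N : ModuleCat.{0} R, Nonempty (M ≅ N) → M ∈ 𝒳 → N ∈ 𝒳) ∧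
    ∀ M ∈ 𝒳, (res S).obj ((ext S).obj M) ∈ 𝒳

lemma good_left (𝒳 : Set (ModuleCat.{0} R)) : Good S (torLeft1 R 𝒳) :=
  ⟨fun _ _ ⟨e⟩ h X hX => (torV_congr e (Iso.refl _) 1).1 (h X hX),
    fun _ h X hX => (F2 S _ X 1).1 (torV_loc S (h X hX))⟩

lemma good_right (𝒳 : Set (ModuleCat.{0} R)) : Good S (torRight1 R 𝒳) :=
  ⟨fun _ _ ⟨e⟩ h X hX => (torV_congr (Iso.refl _) e 1).1 (h X hX),
    fun _ h X hX => (F1 S X _ 1).1 (torV_loc S (h X hX))⟩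

lemma good_shift (𝒳 : Set (ModuleCat.{0} R)) (i : ℕ) : Good S (torShift R 𝒳 i) :=
  ⟨fun _ _ ⟨e⟩ h X hX j hj => (torV_congr (Iso.refl _) e j).1 (h X hX j hj),
    fun _ h X hX j hj => (F1 S X _ j).1 (torV_loc S (h X hX j hj))⟩

lemma mem_loc {𝒳 : Set (ModuleCat.{0} R)} {X : ModuleCat.{0} (Localization S)} :
    X ∈ locClass R S 𝒳 ↔ ∃ M ∈ 𝒳, Nonempty (X ≅ (ext S).obj M) := by
  constructor
  · rintro ⟨M, hM, ⟨e⟩⟩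
    obtain ⟨f⟩ := extIso S M
    exact ⟨M, hM, ⟨e ≪≫ f.symm⟩⟩
  · rintro ⟨M, hM, ⟨e⟩⟩
    obtain ⟨f⟩ := extIso S M
    exact ⟨M, hM, ⟨e ≪≫ f⟩⟩

lemma loc_eq_res {𝒳 : Set (ModuleCat.{0} R)} (h : Good S 𝒳) :
    locClass R S 𝒳 = resClass R S 𝒳 := by
  ext X
  constructor
  · rw [mem_loc]
    rintro ⟨M, hM, ⟨e⟩⟩
    exact h.1 _ _ ⟨(res S).mapIso e.symm⟩ (h.2 M hM)
  · intro hX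
    exact ⟨_, hX, locIso S X⟩

lemma ext_mem {𝒳 : Set (ModuleCat.{0} R)} {M : ModuleCat.{0} R} (h : M ∈ 𝒳) :
    (ext S).obj M ∈ locClass R S 𝒳 :=
  (mem_loc S).2 ⟨M, h, ⟨Iso.refl _⟩⟩

lemma left_loc (𝒳 : Set (ModuleCat.{0} R)) :
    torLeft1 (Localization S) (locClass R S 𝒳) = resClass R S (torLeft1 R 𝒳) := by
  ext X
  constructor
  · intro h N hN
    exact (F2 S X N 1).1 (h _ (ext_mem S hN))
  · intro h Y hY
    obtain ⟨N, hN, ⟨e⟩⟩ := (mem_loc S).1 hY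
    exact (torV_congr (Iso.refl _) e 1).2 ((F2 S X N 1).2 (h N hN))

lemma shift_aux (𝒳 : Set (ModuleCat.{0} R)) (X : ModuleCat.{0} (Localization S)) (j : ℕ) :
    (∀ Y ∈ locClass R S 𝒳, torV (Localization S) Y X j) ↔
      ∀ M ∈ 𝒳, torV R M ((res S).obj X) j := by
  constructor
  · intro h M hM
    exact (F1 S M X j).1 (h _ (ext_mem S hM))
  · intro h Y hY
    obtain ⟨M, hM, ⟨e⟩⟩ := (mem_loc S).1 hY
    exact (torV_congr e (Iso.refl _) j).2 ((F1 S M X j).2 (h M hM))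

lemma right_loc (𝒳 : Set (ModuleCat.{0} R)) :
    torRight1 (Localization S) (locClass R S 𝒳) = resClass R S (torRight1 R 𝒳) := by
  ext X
  exact shift_aux S 𝒳 X 1

lemma shift_loc (𝒳 : Set (ModuleCat.{0} R)) (i : ℕ) :
    torShift (Localization S) (locClass R S 𝒳) i = resClass R S (torShift R 𝒳 i) := by
  ext X
  have := shift_aux S 𝒳 X
  exact ⟨fun h M hM j hj => (this j).1 (fun Y hY => h Y hY j hj) M hM,
    fun h Y hY j hj => (this j).2 (fun M hM => h M hM j hj) Y hY⟩

end main

end TorLoc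

/-- localization of a Tor-pair is a Tor-pair, the localized classes consist
precisely of the `R_S`-modules lying in the original classes, and in the hereditary case
the shifted Tor-pairs localize accordingly. -/
theorem stmt3 (R : Type) [CommRing R] (S : Submonoid R)
    (ℰ 𝒞 : Set (ModuleCat.{0} R)) (h : IsTorPair R ℰ 𝒞) :
    (IsTorPair (Localization S) (locClass R S ℰ) (locClass R S 𝒞) ∧
      locClass R S ℰ = resClass R S ℰ ∧ locClass R S 𝒞 = resClass R S 𝒞) ∧
    (IsHereditaryTorPair R ℰ 𝒞 → ∀ i : ℕ,
      torShift (Localization S) (locClass R S ℰ) i = locClass R S (torShift R ℰ i) ∧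
      torLeft1 (Localization S) (torShift (Localization S) (locClass R S ℰ) i) =
        locClass R S (torLeft1 R (torShift R ℰ i))) := by
  obtain ⟨h1, h2⟩ := h
  have gE : TorLoc.Good S ℰ := h1 ▸ TorLoc.good_left S 𝒞
  have gC : TorLoc.Good S 𝒞 := h2 ▸ TorLoc.good_right S ℰ
  refine ⟨⟨⟨?_, ?_⟩, TorLoc.loc_eq_res S gE, TorLoc.loc_eq_res S gC⟩, fun _ i => ?_⟩
  · rw [TorLoc.left_loc, ← h1, TorLoc.loc_eq_res S gE]
  · rw [TorLoc.right_loc, ← h2, TorLoc.loc_eq_res S gC]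
  · have e := (TorLoc.shift_loc S ℰ i).trans
      (TorLoc.loc_eq_res S (TorLoc.good_shift S ℰ i)).symm
    refine ⟨e, ?_⟩
    rw [e, TorLoc.left_loc, TorLoc.loc_eq_res S (TorLoc.good_left S _)]
end
end

section
/- Let R be a commutative noetherian ring and C a cotorsion R-module. If Hom_R(R_m, C) = 0 for every maximal ideal m of R, then C = 0. -/
open CategoryTheory Opposite

noncomputable section

/-- An `R`-module `C` is cotorsion if `Ext^1_R(F, C) = 0` for every flat `R`-module `F`. -/
def IsCotorsionModule (R : Type) [CommRing R] (C : Type) [AddCommGroup C] [Module R C] : Prop :=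
  ∀ (F : Type) [AddCommGroup F] [Module R F], Module.Flat R F →
    extV R (ModuleCat.of R F) (ModuleCat.of R C) 1

lemma ext_step (R : Type) [Ring R] (X Y : ModuleCat.{0} R) (h : extV R X Y 1)
    (P : ProjectiveResolution X) (φ : P.complex.X 1 ⟶ Y) (hφ : P.complex.d 2 1 ≫ φ = 0) :
    ∃ ψ : P.complex.X 0 ⟶ Y, P.complex.d 1 0 ≫ ψ = φ := by
  have h0 : Limits.IsZero (((_root_.Ext ℤ (ModuleCat.{0} R) 1).obj (op X)).obj Y) :=
    haveI : Subsingleton (((_root_.Ext ℤ (ModuleCat.{0} R) 1).obj (op X)).obj Y) := h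
    ModuleCat.isZero_of_subsingleton _
  have h1 := h0.of_iso (P.isoExt (R := ℤ) 1 Y).symm
  rw [← HomologicalComplex.exactAt_iff_isZero_homology,
    HomologicalComplex.exactAt_iff' _ 0 1 2 (by simp) (by simp),
    ShortComplex.moduleCat_exact_iff] at h1
  exact h1 φ hφ

lemma extend_of_ext (R : Type) [Ring R] (A B D C : Type) [AddCommGroup A] [Module R A]
    [AddCommGroup B] [Module R B] [AddCommGroup D] [Module R D] [AddCommGroup C] [Module R C]
    (h : extV R (ModuleCat.of R D) (ModuleCat.of R C) 1)
    (i : A →ₗ[R] B) (hi : Function.Injective i) (p : B →ₗ[R] D) (hp : Function.Surjective p)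
    (hip : Function.Exact i p) (g : A →ₗ[R] C) : ∃ g' : B →ₗ[R] C, g' ∘ₗ i = g := by
  let P := projectiveResolution (ModuleCat.of R D)
  let e : P.complex.X 0 →ₗ[R] D := (P.π.f 0).hom
  have he : Function.Surjective e :=
    (ModuleCat.epi_iff_surjective (P.π.f 0)).1 inferInstance
  let d1 : P.complex.X 1 →ₗ[R] P.complex.X 0 := (P.complex.d 1 0).hom
  let d2 : P.complex.X 2 →ₗ[R] P.complex.X 1 := (P.complex.d 2 1).hom
  have hd : ∀ x, d1 (d2 x) = 0 := fun x => by
    have := P.complex.d_comp_d 2 1 0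
    exact congrArg (fun f => f.hom x) this
  have hex : ∀ x, e x = 0 → ∃ y, d1 y = x := by
    have := P.exact₀
    rw [ShortComplex.moduleCat_exact_iff] at this
    exact this
  have hed : ∀ y, e (d1 y) = 0 := fun y => by
    have := P.complex_d_comp_π_f_zero
    exact congrArg (fun f => f.hom y) this
  have : Module.Projective R (P.complex.X 0) :=
    (IsProjective.iff_projective _).2 (P.projective 0)
  have : Module.Projective R (P.complex.X 1) :=
    (IsProjective.iff_projective _).2 (P.projective 1)
  obtain ⟨b, hb⟩ := Module.projective_lifting_property p e hp
  have hb' : ∀ x, p (b x) = e x := fun x => LinearMap.congr_fun hb x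
  have hr : ∀ y, b (d1 y) ∈ LinearMap.range i := fun y => by
    have := (hip (b (d1 y))).1 (by rw [hb', hed])
    exact this
  let eqv := LinearEquiv.ofInjective i hi
  let a : P.complex.X 1 →ₗ[R] A := eqv.symm.toLinearMap ∘ₗ (b ∘ₗ d1).codRestrict _ hr
  have ha : ∀ y, i (a y) = b (d1 y) := fun y => by
    have : (eqv (a y) : B) = b (d1 y) := by simp [a]
    exact this
  obtain ⟨ψ, hψ⟩ := ext_step R _ _ h P (ModuleCat.ofHom (g ∘ₗ a)) (by
    ext x
    have : a (d2 x) = 0 := hi (by rw [ha, hd]; simp)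
    change g (a (d2 x)) = 0
    rw [this, map_zero])
  let k : P.complex.X 0 →ₗ[R] C := ψ.hom
  have hk : ∀ y, k (d1 y) = g (a y) := fun y => congrArg (fun f => f.hom y) hψ
  let s : (A × P.complex.X 0) →ₗ[R] B := i.coprod b
  let t : (A × P.complex.X 0) →ₗ[R] C := g.coprod k
  have hs : Function.Surjective s := fun z => by
    obtain ⟨x, hx⟩ := he (p z)
    obtain ⟨w, hw⟩ := (hip (z - b x)).1 (by rw [map_sub, hb', hx, sub_self])
    exact ⟨(w, x), by simp [s, hw]⟩
  have hst : LinearMap.ker s ≤ LinearMap.ker t := by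
    rintro ⟨w, x⟩ hx
    have hx' : i w + b x = 0 := by simpa [s] using hx
    have : e x = 0 := by
      have := congrArg p hx'
      rwa [map_add, hip.apply_apply_eq_zero, zero_add, hb', map_zero] at this
    obtain ⟨y, rfl⟩ := hex x this
    have hw : w = - a y := hi (by rw [map_neg, ha]; exact eq_neg_of_add_eq_zero_left hx')
    simp [t, hw, hk]
  refine ⟨(LinearMap.ker s).liftQ t hst ∘ₗ (s.quotKerEquivOfSurjective hs).symm.toLinearMap, ?_⟩
  ext w
  have : (s.quotKerEquivOfSurjective hs).symm (i w) = Submodule.Quotient.mk (w, 0) := by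
    rw [LinearEquiv.symm_apply_eq]
    simp [s]
  simp [this, t]

lemma flat_fin (R : Type) [CommRing R] (M : Type) [AddCommGroup M] [Module R M] [Module.Flat R M]
    {l k : ℕ} (f : Fin l → R) (q : Fin k → Fin l → R)
    (hq : Submodule.span R (Set.range q) = LinearMap.ker (Fintype.linearCombination R f))
    (z : Fin l → M) (hzm : ∑ i, f i • z i = 0) :
    ∃ y : Fin k → M, ∀ i, z i = ∑ j, q j i • y j := by
  obtain ⟨n, a, y, h1, h2⟩ := Module.Flat.isTrivialRelation_of_sum_smul_eq_zero hzm
  have h3 : ∀ j : Fin n, ∃ d : Fin k → R, ∑ t, d t • q t = fun i => a i j := by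
    intro j
    rw [← Submodule.mem_span_range_iff_exists_fun, hq, LinearMap.mem_ker,
      Fintype.linearCombination_apply, ← h2 j]
    exact Finset.sum_congr rfl fun i _ => by rw [smul_eq_mul, mul_comm]
  choose d hd using h3
  refine ⟨fun t => ∑ j, d j t • y j, fun i => ?_⟩
  rw [h1]
  simp only [Finset.smul_sum]
  rw [Finset.sum_comm]
  refine Finset.sum_congr rfl fun j _ => ?_
  rw [← congrFun (hd j) i]
  simp [Finset.sum_smul, smul_smul, mul_comm]

lemma flat_quot (R : Type) [CommRing R] [IsNoetherianRing R] :
    Module.Flat R ((∀ m : MaximalSpectrum R, Localization.AtPrime m.asIdeal) ⧸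
      LinearMap.range (Algebra.linearMap R
        (∀ m : MaximalSpectrum R, Localization.AtPrime m.asIdeal))) := by
  apply Module.Flat.of_forall_isTrivialRelation
  intro l f x hx
  choose x' hx' using fun i => Submodule.Quotient.mk_surjective _ (x i)
  obtain rfl : x = fun i => Submodule.Quotient.mk (x' i) := funext fun i => (hx' i).symm
  have h1 : (Submodule.Quotient.mk (∑ i, f i • x' i) : _ ⧸ LinearMap.range (Algebra.linearMap R
        (∀ m : MaximalSpectrum R, Localization.AtPrime m.asIdeal))) = 0 := by
    rw [← hx, ← Submodule.mkQ_apply, map_sum]; simp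
  rw [Submodule.Quotient.mk_eq_zero] at h1
  obtain ⟨r, hr⟩ := h1
  have hrI : r ∈ Ideal.span (Set.range f) := by
    apply Ideal.mem_of_localization_maximal
    intro P hP
    have := congrFun hr ⟨P, hP⟩
    simp only [Algebra.linearMap_apply, Pi.algebraMap_apply, Finset.sum_apply, Pi.smul_apply] at this
    rw [this]
    refine Ideal.sum_mem _ fun i _ => ?_
    rw [Algebra.smul_def]
    exact Ideal.mul_mem_right _ _ (Ideal.mem_map_of_mem _ (Ideal.subset_span ⟨i, rfl⟩))
  obtain ⟨c, hc⟩ := (Submodule.mem_span_range_iff_exists_fun R).1 hrI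
  -- relation in the product
  let z : Fin l → ∀ m : MaximalSpectrum R, Localization.AtPrime m.asIdeal :=
    fun i => x' i - algebraMap R _ (c i)
  have hz : ∑ i, f i • z i = 0 := by
    simp only [z, smul_sub, Finset.sum_sub_distrib]
    rw [← hr, ← hc]
    simp [Algebra.smul_def, mul_comm]
  have hK : (LinearMap.ker (Fintype.linearCombination R f)).FG := IsNoetherian.noetherian _
  obtain ⟨k, q, hq⟩ := Submodule.fg_iff_exists_fin_generating_family.1 hK
  have key : ∀ m : MaximalSpectrum R, ∃ y : Fin k → Localization.AtPrime m.asIdeal,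
      ∀ i, z i m = ∑ j, q j i • y j := by
    intro m
    have hzm : ∑ i, f i • z i m = 0 := by
      have := congrFun hz m
      rw [Finset.sum_apply] at this
      exact this
    exact flat_fin R _ f q hq (fun i => z i m) hzm
  choose y hy using key
  refine ⟨k, fun i j => q j i, fun j => Submodule.Quotient.mk (fun m => y m j), fun i => ?_,
    fun j => ?_⟩
  · have e1 : z i = ∑ j, q j i • (fun m => y m j) := by
      funext m
      simp [hy]
    have e2 : (Submodule.Quotient.mk (x' i) : _ ⧸ LinearMap.range (Algebra.linearMap R
        (∀ m : MaximalSpectrum R, Localization.AtPrime m.asIdeal))) =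
        Submodule.Quotient.mk (z i) := by
      rw [Submodule.Quotient.eq]
      exact ⟨c i, by simp [z]⟩
    simp only [e2, e1]
    rw [← Submodule.mkQ_apply, map_sum]
    simp
  · have : q j ∈ LinearMap.ker (Fintype.linearCombination R f) := by
      rw [← hq]; exact Submodule.subset_span ⟨j, rfl⟩
    rw [LinearMap.mem_ker, Fintype.linearCombination_apply] at this
    rw [← this]
    exact Finset.sum_congr rfl fun i _ => by rw [smul_eq_mul, mul_comm]

open Classical in
/-- restriction of an element of the product to a subset -/
def resZ (R : Type) [CommRing R] (Z : Set (MaximalSpectrum R)) :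
    (∀ m : MaximalSpectrum R, Localization.AtPrime m.asIdeal) →ₗ[R]
    (∀ m : MaximalSpectrum R, Localization.AtPrime m.asIdeal) where
  toFun x m := if m ∈ Z then x m else 0
  map_add' x y := by funext m; by_cases h : m ∈ Z <;> simp [h]
  map_smul' r x := by funext m; by_cases h : m ∈ Z <;> simp [h]

lemma resZ_mem (R : Type) [CommRing R] (Z : Set (MaximalSpectrum R)) (x m) (h : m ∈ Z) :
    resZ R Z x m = x m := if_pos h

lemma resZ_notMem (R : Type) [CommRing R] (Z : Set (MaximalSpectrum R)) (x m) (h : m ∉ Z) :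
    resZ R Z x m = 0 := if_neg h

/-- elements vanishing on a dense open subset of `V(I)` -/
def subQ (R : Type) [CommRing R] (I : Ideal R) [hI : I.IsPrime] :
    Submodule R (∀ m : MaximalSpectrum R, Localization.AtPrime m.asIdeal) where
  carrier := {y | ∃ s, s ∉ I ∧ ∀ m, I ≤ m.asIdeal → s ∉ m.asIdeal → y m = 0}
  zero_mem' := ⟨1, hI.one_notMem, fun _ _ _ => rfl⟩
  add_mem' := by
    rintro a b ⟨s, hs, ha⟩ ⟨t, ht, hb⟩
    refine ⟨s * t, fun h => (hI.mem_or_mem h).elim hs ht, fun m hm hst => ?_⟩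
    rw [Pi.add_apply, ha m hm fun h => hst (Ideal.mul_mem_right _ _ h),
      hb m hm fun h => hst (Ideal.mul_mem_left _ _ h), add_zero]
  smul_mem' := by
    rintro r a ⟨s, hs, ha⟩
    exact ⟨s, hs, fun m hm h => by rw [Pi.smul_apply, ha m hm h, smul_zero]⟩

lemma isUnit_loc (R : Type) [CommRing R] (m : MaximalSpectrum R) (s : R) (hs : s ∉ m.asIdeal) :
    IsUnit (algebraMap R (Localization.AtPrime m.asIdeal) s) :=
  IsLocalization.map_units (M := m.asIdeal.primeCompl) _ ⟨s, hs⟩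

lemma isUnit_subQ (R : Type) [CommRing R] (I : Ideal R) [hI : I.IsPrime] (s : R) (hs : s ∉ I) :
    IsUnit (algebraMap R (Module.End R
      ((∀ m : MaximalSpectrum R, Localization.AtPrime m.asIdeal) ⧸ subQ R I)) s) := by
  classical
  rw [Module.End.isUnit_iff]
  constructor
  · rw [injective_iff_map_eq_zero]
    intro y hy
    obtain ⟨y, rfl⟩ := Submodule.Quotient.mk_surjective _ y
    rw [Module.algebraMap_end_apply, ← Submodule.Quotient.mk_smul,
      Submodule.Quotient.mk_eq_zero] at hy
    rw [Submodule.Quotient.mk_eq_zero]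
    obtain ⟨t, ht, hy⟩ := hy
    refine ⟨s * t, fun h => (hI.mem_or_mem h).elim hs ht, fun m hm hst => ?_⟩
    have h1 := hy m hm fun h => hst (Ideal.mul_mem_left _ _ h)
    rw [Pi.smul_apply, Algebra.smul_def] at h1
    exact (isUnit_loc R m s fun h => hst (Ideal.mul_mem_right _ _ h)).mul_right_eq_zero.1 h1
  · intro y
    obtain ⟨y, rfl⟩ := Submodule.Quotient.mk_surjective _ y
    refine ⟨Submodule.Quotient.mk fun m => if h : s ∈ m.asIdeal then 0 else
      ((isUnit_loc R m s h).unit⁻¹ : _) * y m, ?_⟩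
    rw [Module.algebraMap_end_apply, ← Submodule.Quotient.mk_smul, Submodule.Quotient.eq]
    refine ⟨s, hs, fun m hm h => ?_⟩
    rw [Pi.sub_apply, Pi.smul_apply, dif_neg h, Algebra.smul_def, ← mul_assoc,
      IsUnit.mul_val_inv, one_mul, sub_self]

lemma main_vanish (R : Type) [CommRing R] [IsNoetherianRing R]
    (C : Type) [AddCommGroup C] [Module R C]
    (h : ∀ m : MaximalSpectrum R, ∀ f : Localization.AtPrime m.asIdeal →ₗ[R] C, f = 0)
    (f : (∀ m : MaximalSpectrum R, Localization.AtPrime m.asIdeal) →ₗ[R] C) (I : Ideal R) :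
    ∀ x, (∀ m, ¬ I ≤ m.asIdeal → x m = 0) → f x = 0 := by
  classical
  induction I using IsNoetherian.induction with
  | hgt I ih =>
  change Ideal R at I
  intro x hx
  by_cases hI : Ideal.IsPrime I
  · obtain ⟨M, hM, hIM⟩ := Ideal.exists_le_maximal I hI.ne_top
    let V : Set (MaximalSpectrum R) := {m | I ≤ m.asIdeal}
    have hker : subQ R I ≤ LinearMap.ker (f ∘ₗ resZ R V) := by
      rintro y ⟨s, hs, hy⟩
      rw [LinearMap.mem_ker, LinearMap.comp_apply]
      refine ih (I ⊔ Ideal.span {s}) (left_lt_sup.2 fun h => hs (h (Ideal.mem_span_singleton_self s)))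
        _ fun m hm => ?_
      change (if m ∈ V then y m else 0) = 0
      split_ifs with hmV
      · refine hy m hmV fun hsm => hm (sup_le hmV ?_)
        rwa [Ideal.span_singleton_le_iff_mem]
      · rfl
    let g := (subQ R I).liftQ _ hker
    have hu : ∀ s : M.primeCompl, IsUnit (algebraMap R (Module.End R
      ((∀ m : MaximalSpectrum R, Localization.AtPrime m.asIdeal) ⧸ subQ R I)) s) :=
      fun s => isUnit_subQ R I s fun hs => s.2 (hIM hs)
    let L := IsLocalizedModule.lift M.primeCompl
      (Algebra.linearMap R (Localization.AtPrime M))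
      (LinearMap.toSpanSingleton R _ (Submodule.Quotient.mk (p := subQ R I) x)) hu
    have hL : L 1 = Submodule.Quotient.mk x := by
      have := IsLocalizedModule.lift_apply M.primeCompl
        (Algebra.linearMap R (Localization.AtPrime M))
        (LinearMap.toSpanSingleton R _ (Submodule.Quotient.mk (p := subQ R I) x)) hu 1
      simpa using this
    have h0 := LinearMap.congr_fun (h ⟨M, hM⟩ (g ∘ₗ L)) 1
    rw [LinearMap.comp_apply, hL] at h0
    have h1 : f (resZ R V x) = 0 := h0
    have h2 : resZ R V x = x := by
      funext m
      change (if m ∈ V then x m else 0) = x m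
      split_ifs with hmV
      · rfl
      · exact (hx m hmV).symm
    rwa [h2] at h1
  · by_cases ht : I = ⊤
    · have : x = 0 := by
        funext m
        exact hx m fun hm => m.isMaximal.ne_top (top_le_iff.1 (ht ▸ hm))
      rw [this, map_zero]
    · have : ∃ a b, a * b ∈ I ∧ a ∉ I ∧ b ∉ I := by
        by_contra hcon
        push Not at hcon
        exact hI ⟨ht, fun {a b} hab => or_iff_not_imp_left.2 (hcon a b hab)⟩
      obtain ⟨a, b, hab, ha, hb⟩ := this
      let W : Set (MaximalSpectrum R) := {m | a ∈ m.asIdeal}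
      have hsplit : x = resZ R W x + resZ R Wᶜ x := by
        funext m
        rw [Pi.add_apply]
        by_cases hm : m ∈ W
        · rw [resZ_mem R W x m hm, resZ_notMem R Wᶜ x m (fun h => h hm), add_zero]
        · rw [resZ_notMem R W x m hm, resZ_mem R Wᶜ x m hm, zero_add]
      rw [hsplit, map_add]
      rw [ih (I ⊔ Ideal.span {a}) (left_lt_sup.2 fun h => ha (h (Ideal.mem_span_singleton_self a))),
        ih (I ⊔ Ideal.span {b}) (left_lt_sup.2 fun h => hb (h (Ideal.mem_span_singleton_self b))),
        add_zero]
      · intro m hm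
        by_cases hmW : m ∈ Wᶜ
        · rw [resZ_mem R Wᶜ x m hmW]
          refine hx m fun hIm => hm (sup_le hIm ?_)
          rw [Ideal.span_singleton_le_iff_mem]
          exact (m.isMaximal.isPrime.mem_or_mem (hIm hab)).resolve_left hmW
        · exact resZ_notMem R Wᶜ x m hmW
      · intro m hm
        change (if m ∈ W then x m else 0) = 0
        split_ifs with hmW
        · refine hx m fun hIm => hm (sup_le hIm ?_)
          rwa [Ideal.span_singleton_le_iff_mem]
        · rfl

/-- over a commutative noetherian ring, a cotorsion module `C` with
`Hom_R(R_𝔪, C) = 0` for every maximal ideal `𝔪` is zero. -/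
theorem stmt4 (R : Type) [CommRing R] [IsNoetherianRing R]
    (C : Type) [AddCommGroup C] [Module R C] (hC : IsCotorsionModule R C)
    (h : ∀ (𝔪 : PrimeSpectrum R), 𝔪.asIdeal.IsMaximal →
      ∀ f : Localization.AtPrime 𝔪.asIdeal →ₗ[R] C, f = 0) :
    ∀ c : C, c = 0 := by
  intro c
  let Q := ∀ m : MaximalSpectrum R, Localization.AtPrime m.asIdeal
  have hinj : Function.Injective (Algebra.linearMap R Q) := by
    rw [injective_iff_map_eq_zero]
    intro r hr
    have : r ∈ (⊥ : Ideal R) := by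
      apply Ideal.mem_of_localization_maximal
      intro P hP
      have h1 : algebraMap R (Localization.AtPrime P) r = 0 := congrFun hr ⟨P, hP⟩
      rw [h1]
      exact Ideal.zero_mem _
    exact this
  obtain ⟨g, hg⟩ := extend_of_ext R R Q (Q ⧸ LinearMap.range (Algebra.linearMap R Q)) C
    (hC _ (flat_quot R)) (Algebra.linearMap R Q) hinj
    (LinearMap.range (Algebra.linearMap R Q)).mkQ (Submodule.mkQ_surjective _)
    (LinearMap.exact_map_mkQ_range _) (LinearMap.toSpanSingleton R C c)
  have h1 : g (Algebra.linearMap R Q 1) = c := by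
    have := LinearMap.congr_fun hg 1
    simpa using this
  rw [← h1]
  exact main_vanish R C (fun m => h ⟨m.asIdeal, m.isMaximal.isPrime⟩ m.isMaximal) g ⊥ _
    fun m hm => absurd bot_le hm
end
end

section
/- Let R be a commutative noetherian ring and N a pure-injective R-module. Then {}^⊥N = {}^⊥(∏_m Hom_R(R_m, N)), where the product ranges over all maximal ideals m of R. Moreover, if {}^⊥N is a definable class of R-modules, then {}^⊥(Hom_R(R_m, N)) is a definable class of R_m-modules for each maximal ideal m. -/
open CategoryTheory Opposite

noncomputable section

/-- The class `{}^⊥𝒳 = {M ∣ Ext^i_R(M, X) = 0 for all i ≥ 1 and all X ∈ 𝒳}`. -/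
def extPerpAll (R : Type) [Ring R] (𝒳 : Set (ModuleCat.{0} R)) : Set (ModuleCat.{0} R) :=
  {M | ∀ X ∈ 𝒳, ∀ i : ℕ, 1 ≤ i → extV R M X i}

/-- A class of modules is definable if it is closed under isomorphisms, products,
direct limits and pure submodules. -/
def IsDefinableClass (R : Type) [CommRing R] (𝒞 : Set (ModuleCat.{0} R)) : Prop :=
  (∀ X Y : ModuleCat.{0} R, Nonempty (X ≅ Y) → X ∈ 𝒞 → Y ∈ 𝒞) ∧
  (∀ (ι : Type) (G : ι → ModuleCat.{0} R), (∀ i, G i ∈ 𝒞) →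
      ModuleCat.of R (∀ i, ↥(G i)) ∈ 𝒞) ∧
  (∀ (ι : Type) [Preorder ι] [IsDirected ι (· ≤ ·)] [DecidableEq ι] [Nonempty ι]
      (G : ι → Type) [∀ i, AddCommGroup (G i)] [∀ i, Module R (G i)]
      (f : ∀ i j, i ≤ j → G i →ₗ[R] G j), DirectedSystem G (fun i j h => f i j h) →
      (∀ i, ModuleCat.of R (G i) ∈ 𝒞) → ModuleCat.of R (Module.DirectLimit G f) ∈ 𝒞) ∧
  (∀ (A B : Type) [AddCommGroup A] [Module R A] [AddCommGroup B] [Module R B]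
      (f : A →ₗ[R] B), IsPureMono R f → ModuleCat.of R B ∈ 𝒞 → ModuleCat.of R A ∈ 𝒞)

open scoped TensorProduct

theorem aux_extV_iff {A : Type} [Ring A] {X : ModuleCat.{0} A} (P : ProjectiveResolution X)
    (H : ModuleCat.{0} A) (n : ℕ) :
    extV A X H (n+1) ↔ ∀ φ : P.complex.X (n+1) ⟶ H, P.complex.d (n+2) (n+1) ≫ φ = 0 →
      ∃ ψ : P.complex.X n ⟶ H, P.complex.d (n+1) n ≫ ψ = φ := by
  unfold extV
  rw [← ModuleCat.isZero_iff_subsingleton, (P.isoExt (R := ℤ) (n+1) H).isZero_iff,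
    ← HomologicalComplex.exactAt_iff_isZero_homology,
    HomologicalComplex.exactAt_iff' _ n (n+1) (n+2) (by simp) (by simp),
    ShortComplex.moduleCat_exact_iff]
  rfl

theorem aux_extV_iso {A : Type} [Ring A] {X Y H H' : ModuleCat.{0} A} (e : X ≅ Y) (e' : H ≅ H')
    (n : ℕ) : extV A X H n ↔ extV A Y H' n := by
  unfold extV
  rw [← ModuleCat.isZero_iff_subsingleton, ← ModuleCat.isZero_iff_subsingleton]
  exact Iso.isZero_iff (((_root_.Ext ℤ (ModuleCat.{0} A) n).mapIso e.symm.op).app H ≪≫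
    ((_root_.Ext ℤ (ModuleCat.{0} A) n).obj (op Y)).mapIso e')

/-- extension property -/
def EP {A : Type} [Ring A] {K P : Type} [AddCommGroup K] [Module A K] [AddCommGroup P] [Module A P]
  (j : K →ₗ[A] P) (N : Type) [AddCommGroup N] [Module A N] : Prop :=
  ∀ g : K →ₗ[A] N, ∃ h : P →ₗ[A] N, h ∘ₗ j = g

/-- the syzygy -/
abbrev syz {A : Type} [Ring A] {X : ModuleCat.{0} A} (P : ProjectiveResolution X) (n : ℕ) :
    Submodule A (P.complex.X n) := LinearMap.range (P.complex.d (n+1) n).hom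

theorem aux_desc {A : Type} [Ring A] {X : ModuleCat.{0} A} (P : ProjectiveResolution X)
    (N : Type) [AddCommGroup N] [Module A N] (n : ℕ) (φ : P.complex.X (n+1) →ₗ[A] N)
    (h : φ ∘ₗ (P.complex.d (n+2) (n+1)).hom = 0) :
    ∃ g : syz P n →ₗ[A] N, g ∘ₗ (P.complex.d (n+1) n).hom.rangeRestrict = φ := by
  have hex := (ShortComplex.moduleCat_exact_iff _).1 (P.exact_succ n)
  have hk : LinearMap.ker (P.complex.d (n+1) n).hom.rangeRestrict ≤ LinearMap.ker φ := by
    intro x hx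
    rw [LinearMap.ker_rangeRestrict] at hx
    obtain ⟨y, hy⟩ := hex x hx
    have := LinearMap.congr_fun h y
    rw [LinearMap.mem_ker, ← hy]
    exact this
  obtain ⟨s, hs⟩ := (P.complex.d (n+1) n).hom.surjective_rangeRestrict.hasRightInverse
  refine ⟨((LinearMap.ker (P.complex.d (n+1) n).hom.rangeRestrict).liftQ φ hk) ∘ₗ
    ((P.complex.d (n+1) n).hom.rangeRestrict.quotKerEquivOfSurjective
      (P.complex.d (n+1) n).hom.surjective_rangeRestrict).symm.toLinearMap, ?_⟩
  ext x
  have : ((P.complex.d (n+1) n).hom.rangeRestrict.quotKerEquivOfSurjective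
      (P.complex.d (n+1) n).hom.surjective_rangeRestrict).symm
        ((P.complex.d (n+1) n).hom.rangeRestrict x) = Submodule.Quotient.mk x := by
    rw [LinearEquiv.symm_apply_eq]; rfl
  simp only [LinearMap.comp_apply, LinearEquiv.coe_coe]
  rw [this]
  rfl

theorem aux_extV_EP {A : Type} [Ring A] {X : ModuleCat.{0} A} (P : ProjectiveResolution X)
    (N : Type) [AddCommGroup N] [Module A N] (n : ℕ) :
    extV A X (ModuleCat.of A N) (n+1) ↔ EP (syz P n).subtype N := by
  rw [aux_extV_iff P]
  constructor
  · intro H g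
    obtain ⟨ψ, hψ⟩ := H (ModuleCat.ofHom (g ∘ₗ (P.complex.d (n+1) n).hom.rangeRestrict)) (by
      ext x
      have : (P.complex.d (n+1) n).hom.rangeRestrict ((P.complex.d (n+2) (n+1)).hom x) = 0 := by
        apply Subtype.ext
        have := P.complex.d_comp_d (n+2) (n+1) n
        exact LinearMap.congr_fun (congrArg ModuleCat.Hom.hom this) x
      change g ((P.complex.d (n+1) n).hom.rangeRestrict ((P.complex.d (n+2) (n+1)).hom x)) = 0
      rw [this, map_zero])
    refine ⟨ψ.hom, ?_⟩
    ext ⟨_, x, rfl⟩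
    exact LinearMap.congr_fun (congrArg ModuleCat.Hom.hom hψ) x
  · intro H φ hφ
    obtain ⟨g, hg⟩ := aux_desc P N n φ.hom (by
      ext x
      exact LinearMap.congr_fun (congrArg ModuleCat.Hom.hom hφ) x)
    obtain ⟨h, hh⟩ := H g
    refine ⟨ModuleCat.ofHom h, ?_⟩
    ext x
    change h _ = φ.hom x
    rw [← hg, ← hh]
    rfl

theorem aux_char_ext {R : Type} [CommRing R] {A B : Type} [AddCommGroup A] [Module R A]
    [AddCommGroup B] [Module R B] (f : A →ₗ[R] B) (χ : CharacterModule A)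
    (h : ∀ a, f a = 0 → χ a = 0) :
    ∃ χ' : CharacterModule B, CharacterModule.dual f χ' = χ := by
  have hk : LinearMap.ker f ≤ LinearMap.ker f := le_rfl
  let f' : (A ⧸ LinearMap.ker f) →ₗ[R] B := (LinearMap.ker f).liftQ f le_rfl
  have hf' : Function.Injective f' := LinearMap.ker_eq_bot.1 (Submodule.ker_liftQ_eq_bot _ _ _ le_rfl)
  let χ0 : CharacterModule (A ⧸ LinearMap.ker f) :=
    QuotientAddGroup.lift (LinearMap.ker f).toAddSubgroup (show A →+ AddCircle (1:ℚ) from χ)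
      (fun a ha => h a ha)
  obtain ⟨χ', h'⟩ := CharacterModule.dual_surjective_of_injective f' hf' χ0
  refine ⟨χ', ?_⟩
  ext a
  have := DFunLike.congr_fun h' (Submodule.Quotient.mk a)
  exact this

/-- The evaluation map into the double dual. -/
def evDD (R : Type) [CommRing R] (N : Type) [AddCommGroup N] [Module R N] :
    N →ₗ[R] CharacterModule (CharacterModule N) where
  toFun x := 
    { toFun := fun χ => χ x
      map_zero' := rfl
      map_add' := fun _ _ => rfl }
  map_add' x y := by ext χ; exact map_add χ x y
  map_smul' r x := by ext χ; rfl

theorem evDD_apply (R : Type) [CommRing R] (N : Type) [AddCommGroup N] [Module R N] (x : N)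
    (χ : CharacterModule N) : evDD R N x χ = χ x := rfl

theorem evDD_pure (R : Type) [CommRing R] (N : Type) [AddCommGroup N] [Module R N] :
    IsPureMono R (evDD R N) := by
  constructor
  · rw [injective_iff_map_eq_zero]
    intro x hx
    apply CharacterModule.eq_zero_of_character_apply
    intro χ
    exact DFunLike.congr_fun hx χ
  · intro Q _ _
    rw [injective_iff_map_eq_zero]
    intro w hw
    apply CharacterModule.eq_zero_of_character_apply
    intro χ
    let χ' : CharacterModule (Q ⊗[R] CharacterModule (CharacterModule N)) :=
      CharacterModule.uncurry (evDD R (CharacterModule N) ∘ₗ CharacterModule.curry χ)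
    have key : CharacterModule.dual (LinearMap.lTensor Q (evDD R N)) χ' = χ := by
      ext w
      induction w with
      | zero => simp only [map_zero]
      | add x y hx hy => rw [map_add, map_add, hx, hy]
      | tmul q x => rfl
    rw [← key]
    change χ' (LinearMap.lTensor Q (evDD R N) w) = 0
    rw [hw, map_zero]

theorem aux_retract {R : Type} [CommRing R] {N : Type} [AddCommGroup N] [Module R N]
    (hN : PureInjective R N) :
    ∃ ρ : CharacterModule (CharacterModule N) →ₗ[R] N, ρ ∘ₗ evDD R N = LinearMap.id :=
  hN _ _ _ (evDD_pure R N) LinearMap.id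

section abs

variable {R : Type} [CommRing R] {A B GP GK : Type} [AddCommGroup A] [Module R A]
    [AddCommGroup B] [Module R B] [AddCommGroup GP] [Module R GP]
    [AddCommGroup GK] [Module R GK] 

/-- `res` is a retract of `dual t`. -/
def IsRet (t : A →ₗ[R] B) (res : GP →ₗ[R] GK) : Prop :=
  ∃ (sP : GP →ₗ[R] CharacterModule B) (rP : CharacterModule B →ₗ[R] GP)
    (sK : GK →ₗ[R] CharacterModule A) (rK : CharacterModule A →ₗ[R] GK),
    rK ∘ₗ sK = LinearMap.id ∧ res ∘ₗ rP = rK ∘ₗ CharacterModule.dual t ∧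
    CharacterModule.dual t ∘ₗ sP = sK ∘ₗ res

theorem abs_flat {t : A →ₗ[R] B} {res : GP →ₗ[R] GK} (h : IsRet t res)
    (F : Type) [AddCommGroup F] [Module R F] [Module.Flat R F] (φ : F →ₗ[R] GK)
    (hφ : ∀ f, φ f ∈ LinearMap.range res) : ∃ ψ : F →ₗ[R] GP, res ∘ₗ ψ = φ := by
  obtain ⟨sP, rP, sK, rK, h1, h2, h3⟩ := h
  let χ : CharacterModule (F ⊗[R] A) := CharacterModule.uncurry (sK ∘ₗ φ)
  obtain ⟨χ', h'⟩ := aux_char_ext (LinearMap.lTensor F t) χ (by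
    have hex := Module.Flat.lTensor_exact (M := F) (f := (LinearMap.ker t).subtype) (g := t)
      (LinearMap.exact_subtype_ker_map t)
    intro w hw
    obtain ⟨v, rfl⟩ := (hex w).1 hw
    clear hw
    induction v with
    | zero => simp only [map_zero]
    | add x y hx hy => rw [map_add, map_add, hx, hy, add_zero]
    | tmul f x =>
      change sK (φ f) (x : A) = 0
      obtain ⟨g, hg⟩ := hφ f
      have := DFunLike.congr_fun (LinearMap.congr_fun h3 g) (x : A)
      rw [← hg]
      refine this.symm.trans ?_
      change sP g (t (x : A)) = 0
      rw [show t (x : A) = 0 from x.2, map_zero])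
  refine ⟨rP ∘ₗ CharacterModule.curry χ', ?_⟩
  have h4 : CharacterModule.dual t ∘ₗ CharacterModule.curry χ' = sK ∘ₗ φ := by
    ext f a
    exact DFunLike.congr_fun h' (f ⊗ₜ a)
  rw [← LinearMap.comp_assoc, h2, LinearMap.comp_assoc, h4, ← LinearMap.comp_assoc, h1]
  rfl

theorem abs_core {t : A →ₗ[R] B} {res : GP →ₗ[R] GK} (h : IsRet t res)
    (S : Submonoid R) (p : Ideal R) (hp : p.FG) (x₀ : GK)
    (hx : ∀ u ∈ S, ∃ y, x₀ - u • y ∈ p • (⊤ : Submodule R GK) ⊔ LinearMap.range res) :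
    ∃ φ : Localization S →ₗ[R] GK,
      x₀ - φ 1 ∈ p • (⊤ : Submodule R GK) ⊔ LinearMap.range res := by
  classical
  obtain ⟨sP, rP, sK, rK, h1, h2, h3⟩ := h
  obtain ⟨s, hs⟩ := hp
  let t1 : A →ₗ[R] (Localization S ⊗[R] A) := TensorProduct.mk R (Localization S) A 1
  let t2 : A →ₗ[R] (s → A) := LinearMap.pi fun i => LinearMap.lsmul R A i.1
  let t' : A →ₗ[R] ((Localization S ⊗[R] A) × (s → A) × B) := t1.prod (t2.prod t)
  obtain ⟨χ', h'⟩ := aux_char_ext t' (sK x₀) (by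
    intro w hw
    have hw1 : t1 w = 0 := congrArg (fun z => z.1) hw
    have hw2 : t2 w = 0 := congrArg (fun z => z.2.1) hw
    have hw3 : t w = 0 := congrArg (fun z => z.2.2) hw
    have : IsLocalizedModule S t1 :=
      (isLocalizedModule_iff_isBaseChange S (Localization S) _).2 (TensorProduct.isBaseChange _ _ _)
    obtain ⟨u, hu⟩ := (IsLocalizedModule.eq_zero_iff S t1).1 hw1
    obtain ⟨y, hy⟩ := hx u u.2
    have hpw : ∀ a ∈ p, a • w = 0 := by
      intro a ha
      rw [← hs] at ha
      induction ha using Submodule.span_induction with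
      | mem x hx => exact congrFun hw2 ⟨x, hx⟩
      | zero => exact zero_smul _ _
      | add x y _ _ hx hy => rw [add_smul, hx, hy, add_zero]
      | smul a x _ hx => rw [smul_assoc, hx, smul_zero]
    have hz : ∀ z ∈ p • (⊤ : Submodule R GK) ⊔ LinearMap.range res, sK z w = 0 := by
      intro z hz
      obtain ⟨z1, hz1, z2, ⟨g, rfl⟩, rfl⟩ := Submodule.mem_sup.1 hz
      have e1 : sK z1 w = 0 := by
        clear hz
        induction hz1 using Submodule.smul_induction_on' with
        | smul r hr n _ =>
          rw [map_smul, CharacterModule.smul_apply, hpw r hr, map_zero]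
        | add x _ y _ hx hy =>
          rw [map_add]
          change sK x w + sK y w = 0
          rw [hx, hy, add_zero]
      have e2 : sK (res g) w = 0 := by
        refine (DFunLike.congr_fun (LinearMap.congr_fun h3 g) w).symm.trans ?_
        change sP g (t w) = 0
        rw [hw3, map_zero]
      rw [map_add]
      change sK z1 w + sK (res g) w = 0
      rw [e1, e2, add_zero]
    have := hz _ hy
    rw [map_sub, map_smul] at this
    have h5 : (sK x₀) w - ((u:R) • sK y) w = 0 := this
    rw [CharacterModule.smul_apply, show (u:R) • w = 0 from hu, map_zero, sub_zero] at h5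
    exact h5)
  let i1 : Localization S ⊗[R] A →ₗ[R] ((Localization S ⊗[R] A) × (s → A) × B) := LinearMap.inl R _ _
  let i2 : (s → A) →ₗ[R] ((Localization S ⊗[R] A) × (s → A) × B) :=
    LinearMap.inr R _ _ ∘ₗ LinearMap.inl R _ _
  let i3 : B →ₗ[R] ((Localization S ⊗[R] A) × (s → A) × B) :=
    LinearMap.inr R _ _ ∘ₗ LinearMap.inr R _ _
  let c1 := CharacterModule.dual i1 χ'
  let c2 : s → CharacterModule A := fun i =>
    CharacterModule.dual (i2 ∘ₗ LinearMap.single R (fun _ : s => A) i) χ'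
  let c3 := CharacterModule.dual i3 χ'
  let φ0 : Localization S →ₗ[R] CharacterModule A := CharacterModule.curry c1
  have hdec : sK x₀ = φ0 1 + (∑ i : s, i.1 • c2 i + CharacterModule.dual t c3) := by
    rw [← h']
    ext w
    have ht' : t' w = i1 (t1 w) + (∑ i : s, i2 (Pi.single i (i.1 • w)) + i3 (t w)) := by
      have : t2 w = ∑ i : s, Pi.single i (i.1 • w) :=
        (Finset.univ_sum_single (fun i : s => i.1 • w)).symm
      rw [← map_sum, ← this]
      simp [t', i1, i2, i3]
    change χ' (t' w) = _
    rw [ht', map_add, map_add, map_sum]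
    have hsum : (∑ i : s, i.1 • c2 i) w = ∑ i : s, (i.1 • c2 i) w :=
      AddMonoidHom.finsetSum_apply _ _ _
    change _ = φ0 1 w + ((∑ i : s, i.1 • c2 i) w + CharacterModule.dual t c3 w)
    rw [hsum]
    rfl
  refine ⟨rK ∘ₗ φ0, ?_⟩
  have hx0 : x₀ = rK (sK x₀) := (LinearMap.congr_fun h1 x₀).symm
  rw [hx0, hdec, map_add, LinearMap.comp_apply, add_sub_cancel_left, map_add]
  refine Submodule.add_mem_sup ?_ ?_
  · rw [map_sum]
    refine Submodule.sum_mem _ fun i _ => ?_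
    rw [map_smul]
    refine Submodule.smul_mem_smul ?_ trivial
    rw [← hs]
    exact Submodule.subset_span i.2
  · exact ⟨rP c3, LinearMap.congr_fun h2 c3⟩

theorem abs_noeth [IsNoetherianRing R] {t : A →ₗ[R] B} {res : GP →ₗ[R] GK} (h : IsRet t res)
    (H : ∀ m : PrimeSpectrum R, m.asIdeal.IsMaximal →
      ∀ φ : Localization.AtPrime m.asIdeal →ₗ[R] GK, φ 1 ∈ LinearMap.range res) :
    Function.Surjective res := by
  by_contra hns
  have hne : LinearMap.range res ≠ ⊤ := fun h => hns (LinearMap.range_eq_top.1 h)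
  obtain ⟨p, hp, hmax⟩ := set_has_maximal_iff_noetherian.2 (inferInstance : IsNoetherianRing R)
    {I : Ideal R | I • (⊤ : Submodule R GK) ⊔ LinearMap.range res ≠ ⊤} ⟨⊥, by simpa using hne⟩
  have hp1 : p ≠ ⊤ := by
    rintro rfl
    apply hp
    rw [Submodule.top_smul, top_sup_eq]
  obtain ⟨m, hm, hpm⟩ := Ideal.exists_le_maximal p hp1
  obtain ⟨x₀, hx₀⟩ : ∃ x₀, x₀ ∉ p • (⊤ : Submodule R GK) ⊔ LinearMap.range res := by
    by_contra! hc
    exact hp (eq_top_iff.2 fun x _ => hc x)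
  obtain ⟨φ, hφ⟩ := abs_core h m.primeCompl p (IsNoetherian.noetherian p) x₀ (by
    intro u hu
    have hlt : p < p ⊔ Ideal.span {u} := by
      refine lt_of_le_of_ne le_sup_left fun he => hu (hpm ?_)
      rw [he]
      exact Ideal.mem_sup_right (Ideal.mem_span_singleton_self u)
    have htop : (p ⊔ Ideal.span {u}) • (⊤ : Submodule R GK) ⊔ LinearMap.range res = ⊤ := by
      by_contra hc
      exact hmax _ hc hlt
    have hx : x₀ ∈ (p ⊔ Ideal.span {u}) • (⊤ : Submodule R GK) ⊔ LinearMap.range res := by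
      rw [htop]; trivial
    rw [Submodule.sup_smul, sup_assoc, sup_left_comm] at hx
    obtain ⟨z, hz, z', hz', rfl⟩ := Submodule.mem_sup.1 hx
    rw [Submodule.ideal_span_singleton_smul] at hz
    obtain ⟨y, _, rfl⟩ := hz
    refine ⟨y, ?_⟩
    change u • y + z' - u • y ∈ _
    rwa [add_sub_cancel_left])
  apply hx₀
  have := Submodule.add_mem _ hφ (Submodule.mem_sup_right (H ⟨m, hm.isPrime⟩ hm φ))
  rwa [sub_add_cancel] at this

end abs

theorem EP_ret {R : Type} [CommRing R] {K P N : Type} [AddCommGroup K] [Module R K]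
    [AddCommGroup P] [Module R P] [AddCommGroup N] [Module R N] (hN : PureInjective R N)
    (j : K →ₗ[R] P) :
    IsRet (LinearMap.rTensor (CharacterModule N) j) (LinearMap.lcomp R N j) := by
  obtain ⟨ρ, hρ⟩ := aux_retract hN
  have hρ' : ∀ x, ρ (evDD R N x) = x := LinearMap.congr_fun hρ
  refine ⟨CharacterModule.homEquiv.toLinearMap ∘ₗ LinearMap.compRight R (evDD R N),
    LinearMap.compRight R ρ ∘ₗ CharacterModule.homEquiv.symm.toLinearMap,
    CharacterModule.homEquiv.toLinearMap ∘ₗ LinearMap.compRight R (evDD R N),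
    LinearMap.compRight R ρ ∘ₗ CharacterModule.homEquiv.symm.toLinearMap, ?_, ?_, ?_⟩
  · ext g k
    have : CharacterModule.homEquiv.symm (CharacterModule.homEquiv (evDD R N ∘ₗ g)) = evDD R N ∘ₗ g :=
      LinearEquiv.symm_apply_apply _ _
    change ρ (CharacterModule.homEquiv.symm (CharacterModule.homEquiv (evDD R N ∘ₗ g)) k) = g k
    rw [this]
    exact hρ' _
  · ext χ k
    rfl
  · apply LinearMap.ext
    intro g
    ext w
    induction w with
    | zero => simp only [map_zero]
    | add x y hx hy => rw [map_add, map_add, hx, hy]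
    | tmul q x => rfl

theorem EP_iff_surj {R : Type} [CommRing R] {K P N : Type} [AddCommGroup K] [Module R K]
    [AddCommGroup P] [Module R P] [AddCommGroup N] [Module R N] 
    (j : K →ₗ[R] P) : EP j N ↔ Function.Surjective (LinearMap.lcomp R N j) := Iff.rfl

theorem EP_flat {R : Type} [CommRing R] {K P N : Type} [AddCommGroup K] [Module R K]
    [AddCommGroup P] [Module R P] [AddCommGroup N] [Module R N] (hN : PureInjective R N)
    (j : K →ₗ[R] P) (h : EP j N) (F : Type) [AddCommGroup F] [Module R F] [Module.Flat R F] :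
    EP j (F →ₗ[R] N) := by
  intro g
  obtain ⟨ψ, hψ⟩ := abs_flat (EP_ret hN j) F g.flip (fun f => h (g.flip f))
  refine ⟨ψ.flip, ?_⟩
  ext k f
  exact LinearMap.congr_fun (LinearMap.congr_fun hψ f) k

theorem EP_at_one {R : Type} [CommRing R] {K P N : Type} [AddCommGroup K] [Module R K]
    [AddCommGroup P] [Module R P] [AddCommGroup N] [Module R N] 
    (j : K →ₗ[R] P) {F : Type} [AddCommGroup F] [Module R F] (H : EP j (F →ₗ[R] N))
    (φ : F →ₗ[R] (K →ₗ[R] N)) (x : F) : φ x ∈ LinearMap.range (LinearMap.lcomp R N j) := by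
  obtain ⟨h, hh⟩ := H φ.flip
  refine ⟨h.flip x, ?_⟩
  ext k
  exact LinearMap.congr_fun (LinearMap.congr_fun hh k) x

theorem EP_noeth {R : Type} [CommRing R] [IsNoetherianRing R] {K P N : Type} [AddCommGroup K] [Module R K]
    [AddCommGroup P] [Module R P] [AddCommGroup N] [Module R N] (hN : PureInjective R N)
    (j : K →ₗ[R] P) (H : ∀ m : PrimeSpectrum R, m.asIdeal.IsMaximal →
      EP j (Localization.AtPrime m.asIdeal →ₗ[R] N)) : EP j N :=
  abs_noeth (EP_ret hN j) fun m hm φ => EP_at_one j (H m hm) φ 1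

theorem EP_divis {R : Type} [CommRing R] {K P N : Type} [AddCommGroup K] [Module R K]
    [AddCommGroup P] [Module R P] [AddCommGroup N] [Module R N] (hN : PureInjective R N)
    (j : K →ₗ[R] P) (S : Submonoid R) (H : EP j (Localization S →ₗ[R] N))
    (hd : ∀ u ∈ S, ∀ g : K →ₗ[R] N, ∃ (y : K →ₗ[R] N) (h : P →ₗ[R] N), g = u • y + h ∘ₗ j) :
    EP j N := by
  intro g
  obtain ⟨φ, hφ⟩ := abs_core (EP_ret hN j) S ⊥ Submodule.fg_bot g (by
    intro u hu
    obtain ⟨y, h, rfl⟩ := hd u hu g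
    refine ⟨y, Submodule.mem_sup_right ⟨h, ?_⟩⟩
    rw [add_sub_cancel_left]
    rfl)
  rw [Submodule.bot_smul, bot_sup_eq] at hφ
  have := Submodule.add_mem _ hφ (EP_at_one j H φ 1)
  rw [sub_add_cancel] at this
  exact this

theorem EP_pi {R : Type} [CommRing R] {K P : Type} [AddCommGroup K] [Module R K]
    [AddCommGroup P] [Module R P] (j : K →ₗ[R] P) {ι : Type} (G : ι → Type)
    [∀ i, AddCommGroup (G i)] [∀ i, Module R (G i)] : EP j (∀ i, G i) ↔ ∀ i, EP j (G i) := by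
  classical
  constructor
  · intro H i g
    obtain ⟨h, hh⟩ := H (LinearMap.single R G i ∘ₗ g)
    refine ⟨LinearMap.proj i ∘ₗ h, ?_⟩
    rw [LinearMap.comp_assoc, hh]
    ext k
    simp
  · intro H g
    choose h hh using fun i => H i (LinearMap.proj i ∘ₗ g)
    refine ⟨LinearMap.pi h, ?_⟩
    ext k i
    exact LinearMap.congr_fun (hh i) k

theorem aux_divis {R : Type} [CommRing R] {X : ModuleCat.{0} R} (P : ProjectiveResolution X)
    (u : R) (v : X ⟶ X) (huv : u • v = 𝟙 X) (N : Type) [AddCommGroup N] [Module R N] (n : ℕ)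
    (g : syz P n →ₗ[R] N) :
    ∃ (y : syz P n →ₗ[R] N) (h : P.complex.X n →ₗ[R] N), g = u • y + h ∘ₗ (syz P n).subtype := by
  let V := ProjectiveResolution.lift v P P
  let hom : Homotopy (u • V) (𝟙 P.complex) := ProjectiveResolution.liftHomotopy (𝟙 X) _ _
    (by
      rw [Linear.smul_comp, ProjectiveResolution.lift_commutes, ← huv, ← Linear.comp_smul]
      congr 1
      ext
      simp
      rfl)
    (by simp)
  have hc := hom.comm (n+1)
  rw [Homotopy.dNext_succ_chainComplex, Homotopy.prevD_chainComplex] at hc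
  let d := (P.complex.d (n+1) n).hom
  let d' := (P.complex.d (n+2) (n+1)).hom
  have hdd : ∀ z, d.rangeRestrict (d' z) = 0 := by
    intro z
    apply Subtype.ext
    exact LinearMap.congr_fun (congrArg ModuleCat.Hom.hom (P.complex.d_comp_d (n+2) (n+1) n)) z
  let φ : P.complex.X (n+1) →ₗ[R] N := g ∘ₗ d.rangeRestrict
  have hφ : ∀ z, φ (d' z) = 0 := fun z => by
    change g (d.rangeRestrict (d' z)) = 0
    rw [hdd, map_zero]
  obtain ⟨y, hy⟩ := aux_desc P N n (φ ∘ₗ (V.f (n+1)).hom) (by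
    ext z
    have : (V.f (n+1)).hom (d' z) = d' ((V.f (n+2)).hom z) :=
      (LinearMap.congr_fun (congrArg ModuleCat.Hom.hom (V.comm (n+2) (n+1))) z).symm
    change φ ((V.f (n+1)).hom (d' z)) = 0
    rw [this, hφ])
  refine ⟨y, - (φ ∘ₗ (hom.hom n (n+1)).hom), ?_⟩
  have hs : Function.Surjective d.rangeRestrict := d.surjective_rangeRestrict
  ext k
  obtain ⟨x, rfl⟩ := hs k
  have hy' : y (d.rangeRestrict x) = φ ((V.f (n+1)).hom x) := LinearMap.congr_fun hy x
  have hc' : u • (V.f (n+1)).hom x = (hom.hom n (n+1)).hom (d x) + d' ((hom.hom (n+1) (n+2)).hom x) + x :=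
    LinearMap.congr_fun (congrArg ModuleCat.Hom.hom hc) x
  have hc2 := congrArg φ hc'
  rw [map_smul, map_add, map_add, hφ, add_zero] at hc2
  change φ x = u • y (d.rangeRestrict x) + - φ ((hom.hom n (n+1)).hom (d x))
  rw [hy', hc2]
  abel

theorem aux_adj {A B : Type} [CommRing A] [CommRing B] {F : ModuleCat.{0} A ⥤ ModuleCat.{0} B}
    {G : ModuleCat.{0} B ⥤ ModuleCat.{0} A} (adj : F ⊣ G) [F.Additive]
    {A2 A1 A0 : ModuleCat.{0} A}
    (d2 : A2 ⟶ A1) (d1 : A1 ⟶ A0) (H : ModuleCat.{0} B) :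
    (∀ φ : F.obj A1 ⟶ H, F.map d2 ≫ φ = 0 → ∃ ψ : F.obj A0 ⟶ H, F.map d1 ≫ ψ = φ) ↔
    (∀ φ : A1 ⟶ G.obj H, d2 ≫ φ = 0 → ∃ ψ : A0 ⟶ G.obj H, d1 ≫ ψ = φ) := by
  have : G.Additive := adj.right_adjoint_additive
  constructor
  · intro h φ hφ
    obtain ⟨ψ, hψ⟩ := h ((adj.homEquiv _ _).symm φ) (by
      rw [← adj.homEquiv_naturality_left_symm, hφ]
      simp [Adjunction.homEquiv_counit])
    refine ⟨adj.homEquiv _ _ ψ, ?_⟩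
    rw [← adj.homEquiv_naturality_left, hψ, Equiv.apply_symm_apply]
  · intro h φ hφ
    obtain ⟨ψ, hψ⟩ := h (adj.homEquiv _ _ φ) (by
      rw [← adj.homEquiv_naturality_left, hφ]
      simp [Adjunction.homEquiv_unit])
    refine ⟨(adj.homEquiv _ _).symm ψ, ?_⟩
    rw [← adj.homEquiv_naturality_left_symm, hψ, Equiv.symm_apply_apply]

section loc
variable {R : Type} [CommRing R] (S : Submonoid R)

instance restrict_full :
    (ModuleCat.restrictScalars.{0} (algebraMap R (Localization S))).Full where
  map_surjective := by
    intro X Y g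
    refine ⟨ModuleCat.ofHom
      { toFun := fun x => g.hom x
        map_add' := fun a b => map_add g.hom a b
        map_smul' := ?_ }, ?_⟩
    · intro l x
      obtain ⟨r, s, rfl⟩ := IsLocalization.exists_mk'_eq S l
      let g' : X → Y := fun x => g.hom x
      have hlin : ∀ (r : R) (x : X), g' (algebraMap R (Localization S) r • x) =
        algebraMap R (Localization S) r • g' x :=
        fun r x => g.hom.map_smul' r
          (show ↑((ModuleCat.restrictScalars.{0} (algebraMap R (Localization S))).obj X) from x)
      have hu : IsUnit (algebraMap R (Localization S) s) := IsLocalization.map_units _ s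
      have : ∀ a b : Y, algebraMap R (Localization S) s • a = algebraMap R (Localization S) s • b → a = b :=
        fun a b h => hu.smul_left_cancel.1 h
      apply this
      change algebraMap R (Localization S) s • g' (IsLocalization.mk' (Localization S) r s • x) =
        algebraMap R (Localization S) s • (IsLocalization.mk' (Localization S) r s • g' x)
      rw [smul_smul, IsLocalization.mk'_spec', ← hlin, ← hlin, smul_smul,
        IsLocalization.mk'_spec']
    · rfl

theorem base_change (X H : ModuleCat.{0} (Localization S)) (n : ℕ) :
    extV (Localization S) X H (n+1) ↔
    extV R ((ModuleCat.restrictScalars (algebraMap R (Localization S))).obj X)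
      ((ModuleCat.restrictScalars (algebraMap R (Localization S))).obj H) (n+1) := by
  let f := algebraMap R (Localization S)
  let F := ModuleCat.extendScalars.{0,0,0} f
  let G := ModuleCat.restrictScalars.{0} f
  let adj : F ⊣ G := ModuleCat.extendRestrictScalarsAdj.{0} f
  have hflat : f.Flat := by
    rw [RingHom.flat_algebraMap_iff]; infer_instance
  have : Limits.PreservesFiniteLimits F := ModuleCat.preservesFiniteLimits_extendScalars_of_flat hflat
  have : F.IsLeftAdjoint := adj.isLeftAdjoint
  have : F.Additive := adj.left_adjoint_additive
  have : F.PreservesHomology := inferInstance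
  have : F.PreservesProjectiveObjects := ⟨fun {X} hX => adj.map_projective X hX⟩
  have : IsIso (adj.counit.app X) := inferInstance
  let P := ProjectiveResolution.of (G.obj X)
  let FP := F.mapProjectiveResolution P
  have e : F.obj (G.obj X) ≅ X := asIso (adj.counit.app X)
  rw [aux_extV_iso e.symm (Iso.refl H), aux_extV_iff FP, aux_extV_iff P]
  exact aux_adj adj _ _ H

theorem perp_loc (N : Type) [AddCommGroup N] [Module R N] (hN : PureInjective R N)
    (X : ModuleCat.{0} (Localization S)) :
    X ∈ extPerpAll (Localization S) {ModuleCat.of (Localization S) (Localization S →ₗ[R] N)} ↔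
    (ModuleCat.restrictScalars (algebraMap R (Localization S))).obj X ∈
      extPerpAll R {ModuleCat.of R N} := by
  let G := ModuleCat.restrictScalars.{0} (algebraMap R (Localization S))
  let P := ProjectiveResolution.of (G.obj X)
  have key : ∀ n, extV (Localization S) X
      (ModuleCat.of (Localization S) (Localization S →ₗ[R] N)) (n+1) ↔
      extV R (G.obj X) (ModuleCat.of R N) (n+1) := by
    intro n
    let e0 : G.obj (ModuleCat.of (Localization S) (Localization S →ₗ[R] N)) ≃ₗ[R]
        (Localization S →ₗ[R] N) :=
      { toFun := fun f => f
        invFun := fun f => f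
        left_inv := fun _ => rfl
        right_inv := fun _ => rfl
        map_add' := fun _ _ => rfl
        map_smul' := fun r f => by
          apply LinearMap.ext
          intro y
          have : ∀ f : Localization S →ₗ[R] N,
              f (algebraMap R (Localization S) r * y) = r • f y := by
            intro f
            rw [← Algebra.smul_def, map_smul]
          exact this f }
    have e : G.obj (ModuleCat.of (Localization S) (Localization S →ₗ[R] N)) ≅
        ModuleCat.of R (Localization S →ₗ[R] N) := e0.toModuleIso
    rw [base_change, aux_extV_iso (Iso.refl _) e, aux_extV_EP P, aux_extV_EP P]
    constructor
    · intro h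
      refine EP_divis hN _ S h ?_
      intro u hu g
      have huu : IsUnit (algebraMap R (Localization S) u) := IsLocalization.map_units _ (⟨u, hu⟩ : S)
      obtain ⟨w, hw⟩ := huu.exists_right_inv
      let v : X ⟶ X := ModuleCat.ofHom (LinearMap.lsmul (Localization S) X w)
      refine aux_divis P u (G.map v) ?_ N n g
      ext x
      change algebraMap R (Localization S) u • (w • (show X from x)) = (show X from x)
      rw [smul_smul, hw, one_smul]
    · intro h
      exact EP_flat hN _ h _
  constructor
  · rintro h _ rfl i hi
    obtain ⟨n, rfl⟩ := Nat.exists_eq_add_of_le' hi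
    exact (key n).1 (h _ rfl _ hi)
  · rintro h _ rfl i hi
    obtain ⟨n, rfl⟩ := Nat.exists_eq_add_of_le' hi
    exact (key n).2 (h _ rfl _ hi)

end loc

theorem part1 (R : Type) [CommRing R] [IsNoetherianRing R]
    (N : Type) [AddCommGroup N] [Module R N] (hN : PureInjective R N) :
    extPerpAll R {ModuleCat.of R N} =
      extPerpAll R {ModuleCat.of R
        (∀ m : {m : PrimeSpectrum R // m.asIdeal.IsMaximal},
          Localization.AtPrime m.1.asIdeal →ₗ[R] N)} := by
  ext X
  let P := ProjectiveResolution.of X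
  have key : ∀ n, extV R X (ModuleCat.of R N) (n+1) ↔
      extV R X (ModuleCat.of R
        (∀ m : {m : PrimeSpectrum R // m.asIdeal.IsMaximal},
          Localization.AtPrime m.1.asIdeal →ₗ[R] N)) (n+1) := by
    intro n
    rw [aux_extV_EP P, aux_extV_EP P, EP_pi]
    constructor
    · intro h m
      exact EP_flat hN _ h _
    · intro h
      exact EP_noeth hN _ fun m hm => h ⟨m, hm⟩
  constructor
  · rintro h _ rfl i hi
    obtain ⟨n, rfl⟩ := Nat.exists_eq_add_of_le' hi
    exact (key n).1 (h _ rfl _ hi)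
  · rintro h _ rfl i hi
    obtain ⟨n, rfl⟩ := Nat.exists_eq_add_of_le' hi
    exact (key n).2 (h _ rfl _ hi)

theorem pure_restrict {R T : Type} [CommRing R] [CommRing T] [Algebra R T] {A B : Type}
    [AddCommGroup A] [Module T A] [Module R A] [IsScalarTower R T A]
    [AddCommGroup B] [Module T B] [Module R B] [IsScalarTower R T B]
    (f : A →ₗ[T] B) (hf : IsPureMono T f) : IsPureMono R (f.restrictScalars R) := by
  refine ⟨hf.1, ?_⟩
  intro Q _ _
  let eA : Q ⊗[R] A → (T ⊗[R] Q) ⊗[T] A := fun x => TensorProduct.comm T A (T ⊗[R] Q)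
    ((TensorProduct.AlgebraTensorModule.cancelBaseChange R T T A Q).symm
      (TensorProduct.comm R Q A x))
  let eB : Q ⊗[R] B → (T ⊗[R] Q) ⊗[T] B := fun x => TensorProduct.comm T B (T ⊗[R] Q)
    ((TensorProduct.AlgebraTensorModule.cancelBaseChange R T T B Q).symm
      (TensorProduct.comm R Q B x))
  have hA : Function.Injective eA :=
    (TensorProduct.comm T A (T ⊗[R] Q)).injective.comp
      ((TensorProduct.AlgebraTensorModule.cancelBaseChange R T T A Q).symm.injective.comp
        (TensorProduct.comm R Q A).injective)
  have hc : ∀ x, eB (LinearMap.lTensor Q (f.restrictScalars R) x) =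
      LinearMap.lTensor (T ⊗[R] Q) f (eA x) := by
    intro x
    induction x using TensorProduct.induction_on with
    | zero => simp only [eA, eB, map_zero]
    | tmul q a => rfl
    | add x y hx hy =>
      simp only [eA, eB, map_add] at hx hy ⊢
      rw [hx, hy]
  intro x y hxy
  apply hA
  apply hf.2 (T ⊗[R] Q)
  rw [← hc, ← hc, hxy]

theorem extPerp_iso {R : Type} [CommRing R] (N : ModuleCat.{0} R) {X Y : ModuleCat.{0} R}
    (e : X ≅ Y) (h : X ∈ extPerpAll R {N}) : Y ∈ extPerpAll R {N} := by
  rintro _ rfl i hi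
  exact (aux_extV_iso e (Iso.refl _) i).1 (h _ rfl i hi)

theorem perp_loc' {R : Type} [CommRing R] (S : Submonoid R) (N : Type) [AddCommGroup N]
    [Module R N] (hN : PureInjective R N)
    (A : Type) [AddCommGroup A] [Module (Localization S) A] [Module R A]
    [IsScalarTower R (Localization S) A] :
    ModuleCat.of (Localization S) A ∈
      extPerpAll (Localization S) {ModuleCat.of (Localization S) (Localization S →ₗ[R] N)} ↔
    ModuleCat.of R A ∈ extPerpAll R {ModuleCat.of R N} := by
  let e0 : (ModuleCat.restrictScalars (algebraMap R (Localization S))).obj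
      (ModuleCat.of (Localization S) A) ≃ₗ[R] A :=
    { toFun := fun f => f
      invFun := fun f => f
      left_inv := fun _ => rfl
      right_inv := fun _ => rfl
      map_add' := fun _ _ => rfl
      map_smul' := fun r a => algebraMap_smul (Localization S) r (show A from a) }
  have e : (ModuleCat.restrictScalars (algebraMap R (Localization S))).obj
      (ModuleCat.of (Localization S) A) ≅ ModuleCat.of R A := e0.toModuleIso
  rw [perp_loc S N hN]
  exact ⟨extPerp_iso _ e, extPerp_iso _ e.symm⟩

theorem dl_equiv {R T : Type} [CommRing R] [CommRing T] [Algebra R T]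
    (ι : Type) [Preorder ι] [IsDirected ι (· ≤ ·)] [DecidableEq ι] [Nonempty ι]
    (G : ι → Type) [∀ i, AddCommGroup (G i)] [∀ i, Module T (G i)] [∀ i, Module R (G i)]
    [∀ i, IsScalarTower R T (G i)]
    (f : ∀ i j, i ≤ j → G i →ₗ[T] G j) (hd : DirectedSystem G (fun i j h => f i j h))
    [Module R (Module.DirectLimit G f)] [IsScalarTower R T (Module.DirectLimit G f)] :
    Nonempty (Module.DirectLimit G (fun i j h => (f i j h).restrictScalars R) ≃ₗ[R]
      Module.DirectLimit G f) := by
  let L := Module.DirectLimit.lift R ι G (fun i j h => (f i j h).restrictScalars R)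
    (fun i => (Module.DirectLimit.of T ι G f i).restrictScalars R)
    (fun i j h x => Module.DirectLimit.of_f)
  have hL : ∀ i x, L (Module.DirectLimit.of R ι G _ i x) = Module.DirectLimit.of T ι G f i x :=
    fun i x => Module.DirectLimit.lift_of _ _ x
  refine ⟨LinearEquiv.ofBijective L ⟨?_, ?_⟩⟩
  · rw [injective_iff_map_eq_zero]
    intro z hz
    obtain ⟨i, x, rfl⟩ := Module.DirectLimit.exists_of z
    rw [hL] at hz
    obtain ⟨j, hij, hx⟩ := Module.DirectLimit.of.zero_exact hz
    have := Module.DirectLimit.of_f (R := R) (G := G)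
      (f := fun i j h => (f i j h).restrictScalars R) (i := i) (j := j) (hij := hij) (x := x)
    rw [← this]
    change Module.DirectLimit.of R ι G _ j (f i j hij x) = 0
    rw [hx, map_zero]
  · intro z
    obtain ⟨i, x, rfl⟩ := Module.DirectLimit.exists_of z
    exact ⟨_, hL i x⟩

theorem part2 {R : Type} [CommRing R] (S : Submonoid R) (N : Type) [AddCommGroup N]
    [Module R N] (hN : PureInjective R N)
    (hdef : IsDefinableClass R (extPerpAll R {ModuleCat.of R N})) :
    IsDefinableClass (Localization S)
      (extPerpAll (Localization S)
        {ModuleCat.of (Localization S) (Localization S →ₗ[R] N)}) := by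
  obtain ⟨-, h2, h3, h4⟩ := hdef
  refine ⟨fun X Y ⟨e⟩ h => extPerp_iso _ e h, ?_, ?_, ?_⟩
  · intro ι G hG
    letI : ∀ i, Module R (G i) := fun i => Module.compHom (G i) (algebraMap R (Localization S))
    haveI : ∀ i, IsScalarTower R (Localization S) (G i) :=
      fun i => IsScalarTower.of_algebraMap_smul fun _ _ => rfl
    rw [perp_loc' S N hN]
    exact h2 ι (fun i => ModuleCat.of R (G i)) fun i => (perp_loc' S N hN (G i)).1 (hG i)
  · intro ι _ _ _ _ G _ _ f hd hG
    letI : ∀ i, Module R (G i) := fun i => Module.compHom (G i) (algebraMap R (Localization S))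
    haveI : ∀ i, IsScalarTower R (Localization S) (G i) :=
      fun i => IsScalarTower.of_algebraMap_smul fun _ _ => rfl
    letI : Module R (Module.DirectLimit G f) := Module.compHom _ (algebraMap R (Localization S))
    haveI : IsScalarTower R (Localization S) (Module.DirectLimit G f) :=
      IsScalarTower.of_algebraMap_smul fun _ _ => rfl
    rw [perp_loc' S N hN]
    obtain ⟨e⟩ := dl_equiv (R := R) ι G f hd
    refine extPerp_iso _ e.toModuleIso ?_
    refine h3 ι G _ ?_ fun i => (perp_loc' S N hN (G i)).1 (hG i)
    exact ⟨fun i x => hd.map_self x, fun i j k hij hjk x => hd.map_map hij hjk x⟩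
  · intro A B _ _ _ _ f hf hB
    letI : Module R A := Module.compHom A (algebraMap R (Localization S))
    haveI : IsScalarTower R (Localization S) A := IsScalarTower.of_algebraMap_smul fun _ _ => rfl
    letI : Module R B := Module.compHom B (algebraMap R (Localization S))
    haveI : IsScalarTower R (Localization S) B := IsScalarTower.of_algebraMap_smul fun _ _ => rfl
    rw [perp_loc' S N hN] at hB ⊢
    exact h4 A B _ (pure_restrict f hf) hB

/-- for a commutative noetherian ring `R` and a pure-injective module `N`,
`{}^⊥N = {}^⊥(∏_𝔪 Hom_R(R_𝔪, N))`, and if `{}^⊥N` is definable, then so is the class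
`{}^⊥(Hom_R(R_𝔪, N))` of `R_𝔪`-modules, for each maximal ideal `𝔪`. -/
theorem stmt6 (R : Type) [CommRing R] [IsNoetherianRing R]
    (N : Type) [AddCommGroup N] [Module R N] (hN : PureInjective R N) :
    extPerpAll R {ModuleCat.of R N} =
      extPerpAll R {ModuleCat.of R
        (∀ m : {m : PrimeSpectrum R // m.asIdeal.IsMaximal},
          Localization.AtPrime m.1.asIdeal →ₗ[R] N)} ∧
    (IsDefinableClass R (extPerpAll R {ModuleCat.of R N}) →
      ∀ (m : PrimeSpectrum R), m.asIdeal.IsMaximal →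
        IsDefinableClass (Localization.AtPrime m.asIdeal)
          (extPerpAll (Localization.AtPrime m.asIdeal)
            {ModuleCat.of (Localization.AtPrime m.asIdeal)
              (Localization.AtPrime m.asIdeal →ₗ[R] N)})) :=
  ⟨part1 R N hN, fun hdef m _ => part2 m.asIdeal.primeCompl N hN hdef⟩
end
end
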